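/- arXiv:2506.09618 — 3 statements merged into one kernel-verified Lean document; each statement's English description precedes it below -/
import Mathlib

section
/- Let C be an arbitrary set of corner minors of M and let 𝒲 denote the set of admissible sets W ⊆ V(C) for which P_W(C) is a minimal prime of I(C). Then I(C) = (⋂_{W ∈ 𝒲} P_W(C)) ∩ (⋂_{W ∈ 𝒲, W ≠ ∅} (I(C) + P_W(C)²)). -/
open MvPolynomial

/-- A 2-minor `[a₁,a₂|b₁,b₂]` (with `a₁ < a₂`, `b₁ < b₂`) of the `m × n` matrix
of indeterminates `M = (x_{ij})`. -/
structure Minor2 (m n : ℕ) where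
  a1 : Fin m
  a2 : Fin m
  b1 : Fin n
  b2 : Fin n
  ha : a1 < a2
  hb : b1 < b2

namespace Minor2

variable {m n : ℕ}

/-- The vertex set of a 2-minor. -/
def vertexSet (δ : Minor2 m n) : Set (Fin m × Fin n) :=
  {(δ.a1, δ.b1), (δ.a1, δ.b2), (δ.a2, δ.b1), (δ.a2, δ.b2)}

/-- `{p,q}` is one of the two vertical edges of the minor `δ`. -/
def VertEdge (δ : Minor2 m n) (p q : Fin m × Fin n) : Prop :=
  ({p, q} : Set (Fin m × Fin n)) = {(δ.a1, δ.b1), (δ.a2, δ.b1)} ∨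
  ({p, q} : Set (Fin m × Fin n)) = {(δ.a1, δ.b2), (δ.a2, δ.b2)}

/-- `{p,q}` is one of the two horizontal edges of the minor `δ`. -/
def HorizEdge (δ : Minor2 m n) (p q : Fin m × Fin n) : Prop :=
  ({p, q} : Set (Fin m × Fin n)) = {(δ.a1, δ.b1), (δ.a1, δ.b2)} ∨
  ({p, q} : Set (Fin m × Fin n)) = {(δ.a2, δ.b1), (δ.a2, δ.b2)}

/-- `{p,q}` is an edge (vertical or horizontal) of the minor `δ`. -/
def IsEdge (δ : Minor2 m n) (p q : Fin m × Fin n) : Prop :=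
  δ.VertEdge p q ∨ δ.HorizEdge p q

/-- The binomial `f_δ = x_{a₁b₁}x_{a₂b₂} − x_{a₁b₂}x_{a₂b₁}` of the 2-minor `δ`. -/
noncomputable def binom (K : Type*) [Field K] (δ : Minor2 m n) : MvPolynomial (Fin m × Fin n) K :=
  X (δ.a1, δ.b1) * X (δ.a2, δ.b2) - X (δ.a1, δ.b2) * X (δ.a2, δ.b1)

end Minor2

/-- The vertex set `V(C)` of a collection `C` of 2-minors. -/
def vertexSetOf {m n : ℕ} (C : Set (Minor2 m n)) : Set (Fin m × Fin n) :=
  ⋃ δ ∈ C, δ.vertexSet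

/-- The binomial ideal `I(C)` generated by the binomials of the minors in `C`. -/
noncomputable def minorIdeal (K : Type*) [Field K] {m n : ℕ} (C : Set (Minor2 m n)) :
    Ideal (MvPolynomial (Fin m × Fin n) K) :=
  Ideal.span {f | ∃ δ ∈ C, f = Minor2.binom K δ}

/-- Two positions are joined by a vertical edge of some minor of `C`. -/
def vertAdj {m n : ℕ} (C : Set (Minor2 m n)) (p q : Fin m × Fin n) : Prop :=
  ∃ δ ∈ C, δ.VertEdge p q

/-- Two positions are joined by a horizontal edge of some minor of `C`. -/
def horizAdj {m n : ℕ} (C : Set (Minor2 m n)) (p q : Fin m × Fin n) : Prop :=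
  ∃ δ ∈ C, δ.HorizEdge p q

/-- The maximal vertical interval of `C` containing a position, encoded as the class of the
position under connectivity by vertical edges of minors of `C`. -/
def vClass {m n : ℕ} (C : Set (Minor2 m n)) (p : Fin m × Fin n) : Quot (vertAdj C) :=
  Quot.mk _ p

/-- The maximal horizontal interval of `C` containing a position. -/
def hClass {m n : ℕ} (C : Set (Minor2 m n)) (p : Fin m × Fin n) : Quot (horizAdj C) :=
  Quot.mk _ p

/-- The monomial map `φ` with `φ(x_{ab}) = h_i v_j`, where `H_i` and `V_j` are the maximal
horizontal and vertical intervals of `C` containing `x_{ab}` (variables not appearing in any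
minor of `C` are sent to products of fresh variables, so that the kernel of `φ` is the
extension to `S` of the toric ideal `J_C ⊆ S_C`). -/
noncomputable def phiC (K : Type*) [Field K] {m n : ℕ} (C : Set (Minor2 m n)) :
    MvPolynomial (Fin m × Fin n) K →ₐ[K]
      MvPolynomial (Quot (horizAdj C) ⊕ Quot (vertAdj C)) K :=
  aeval fun p => X (Sum.inl (hClass C p)) * X (Sum.inr (vClass C p))

/-- The toric ideal `J_C = ker φ`. -/
noncomputable def toricIdeal (K : Type*) [Field K] {m n : ℕ} (C : Set (Minor2 m n)) :
    Ideal (MvPolynomial (Fin m × Fin n) K) :=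
  RingHom.ker (phiC K C)

/-- A subset `W ⊆ V(C)` is admissible if for every `δ ∈ C` either `W ∩ V(δ) = ∅`
or `W` contains an edge of `δ`. -/
def Admissible {m n : ℕ} (C : Set (Minor2 m n)) (W : Set (Fin m × Fin n)) : Prop :=
  W ⊆ vertexSetOf C ∧
    ∀ δ ∈ C, W ∩ δ.vertexSet = ∅ ∨ ∃ p q, p ∈ W ∧ q ∈ W ∧ δ.IsEdge p q

/-- `C' = {δ ∈ C : V(δ) ∩ W = ∅}`. -/
def minorsAvoiding {m n : ℕ} (C : Set (Minor2 m n)) (W : Set (Fin m × Fin n)) :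
    Set (Minor2 m n) :=
  {δ ∈ C | δ.vertexSet ∩ W = ∅}

/-- The ideal generated by the variables with index in `W`. -/
noncomputable def varIdeal (K : Type*) [Field K] {m n : ℕ} (W : Set (Fin m × Fin n)) :
    Ideal (MvPolynomial (Fin m × Fin n) K) :=
  Ideal.span ((fun p => (X p : MvPolynomial (Fin m × Fin n) K)) '' W)

/-- The prime ideal `P_W(C) = (x_{ij} : x_{ij} ∈ W) + J_{C'}`,
where `C' = {δ ∈ C : V(δ) ∩ W = ∅}`. -/
noncomputable def PW (K : Type*) [Field K] {m n : ℕ} (C : Set (Minor2 m n))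
    (W : Set (Fin m × Fin n)) : Ideal (MvPolynomial (Fin m × Fin n) K) :=
  varIdeal K W + toricIdeal K (minorsAvoiding C W)

/-- A cycle `σ : h_{i₁}, v_{j₁}, h_{i₂}, v_{j₂}, …, h_{i_r}, v_{j_r}` (`r ≥ 2`) of the
bipartite graph `G(C)`, recorded by the intersection vertices
`p k = H_{i_k} ∩ V_{j_k}` and `q k = H_{i_{k+1}} ∩ V_{j_k}` (indices cyclic, `r = len + 2`). -/
structure CycleIn {m n : ℕ} (C : Set (Minor2 m n)) where
  len : ℕ
  p : Fin (len + 2) → Fin m × Fin n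
  q : Fin (len + 2) → Fin m × Fin n
  p_mem : ∀ k, p k ∈ vertexSetOf C
  q_mem : ∀ k, q k ∈ vertexSetOf C
  shareV : ∀ k, vClass C (p k) = vClass C (q k)
  shareH : ∀ k, hClass C (q k) = hClass C (p (k + 1))
  injH : Function.Injective fun k => hClass C (p k)
  injV : Function.Injective fun k => vClass C (p k)

/-- The binomial `f_σ` associated to a cycle `σ` of `G(C)`. -/
noncomputable def cycleBinom (K : Type*) [Field K] {m n : ℕ} {C : Set (Minor2 m n)}
    (σ : CycleIn C) : MvPolynomial (Fin m × Fin n) K :=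
  (∏ k, X (σ.p k)) - (∏ k, X (σ.q k))

/-!
Monomials fall into classes under the moves `x_{a₁b₁} x_{a₂b₂} ↔ x_{a₁b₂} x_{a₂b₁}` along the
minors of `C`. The ideal `I(C)` is the kernel of the map sending a monomial to its class, and
`J_C` the kernel of the coarser map sending it to its multidegree. Hence `f ∈ J_C` lies in `I(C)`
as soon as distinct classes occurring in `f` have distinct multidegrees.

A corner minor with lower right vertex `(i, j)` is an edge `{i, j}` of a bipartite graph, and the
relevant minimal primes other than `J_C` are generated by `x₀₀` and the variables `x_{i0}`, `x_{0j}`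
with `i`, `j` in a minimal vertex cover. If `f` lies in all of these monomial primes, each class
occurring in `f` contains some `x₀₀ u`, for otherwise the variables of the first row and column
missing from `u` would give a cover.

Two monomials of the same multidegree become equivalent after multiplication by `x₀₀` if one of
them is divisible by `x₀₀`; this settles the classes containing a multiple of `x₀₀²`. If `x₀₀ u` is
not equivalent to a multiple of `x₀₀²`, there is a minimal cover together with a move invariant
weight, at least one on the variables of its prime `P_W`, for which `x₀₀ u` has weight one. Thus
`x₀₀ u` does not occur modulo `I(C)` in an element of `I(C) + P_W²`. This contradicts the hypothesis
on `f`, unless `J_C ⊆ P_W` and so `P_W` need not be minimal; but then no other class has the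
multidegree of `x₀₀ u`.
-/

section MonoidAlgebraKernel

variable {R M N : Type*} [CommRing R] [AddCommMonoid M] [AddCommMonoid N]

theorem single_sub_single_mem_of_addConGen {r : M → M → Prop} {I : Ideal (AddMonoidAlgebra R M)}
    (hI : ∀ u v, r u v → AddMonoidAlgebra.single u (1 : R) - .single v 1 ∈ I) {u v : M}
    (huv : addConGen r u v) (a : R) :
    AddMonoidAlgebra.single u a - .single v a ∈ I := by
  induction huv generalizing a with
  | of u v h =>
    simpa [mul_sub, AddMonoidAlgebra.single_mul_single] using
      I.mul_mem_left (.single 0 a) (hI u v h)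
  | refl u => simp
  | symm _ ih => simpa using I.neg_mem (ih a)
  | trans _ _ ih₁ ih₂ => simpa using I.add_mem (ih₁ a) (ih₂ a)
  | @add u₁ v₁ u₂ v₂ _ _ ih₁ ih₂ =>
    have := I.add_mem (I.mul_mem_right (.single u₂ 1) (ih₁ a))
      (I.mul_mem_left (.single v₁ a) (ih₂ 1))
    simpa [mul_sub, sub_mul, AddMonoidAlgebra.single_mul_single] using this

theorem ker_mapDomainAlgHom_of_ker_eq_addConGen {φ : M →+ N} {r : M → M → Prop}
    (hφ : AddCon.ker φ = addConGen r) :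
    RingHom.ker (AddMonoidAlgebra.mapDomainAlgHom R R φ) =
      Ideal.span {x : AddMonoidAlgebra R M | ∃ u v, r u v ∧ x = .single u 1 - .single v 1} := by
  set I : Ideal (AddMonoidAlgebra R M) := Ideal.span _ with hI
  apply le_antisymm
  · -- Modulo `I` every element is recovered from its image by choosing representatives.
    let s : AddMonoidAlgebra R N → AddMonoidAlgebra R M :=
      AddMonoidAlgebra.mapDomain (Function.invFun φ)
    have sub_mem : ∀ f, f - s (AddMonoidAlgebra.mapDomain φ f) ∈ I := by
      intro f
      induction f using AddMonoidAlgebra.induction with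
      | zero => simp [s]
      | single_add u a f _ _ ih =>
        have hu : addConGen r u (Function.invFun φ (φ u)) :=
          hφ ▸ (Function.invFun_eq ⟨u, rfl⟩).symm
        have hgen : ∀ u v, r u v → AddMonoidAlgebra.single u (1 : R) - .single v 1 ∈ I :=
          fun u v h => Ideal.subset_span ⟨u, v, h, rfl⟩
        simpa [s, AddMonoidAlgebra.mapDomain_add, add_sub_add_comm] using
          I.add_mem (single_sub_single_mem_of_addConGen hgen hu a) ih
    intro f hf
    have hf : AddMonoidAlgebra.mapDomain φ f = 0 := hf
    simpa [s, hf] using sub_mem f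
  · rw [hI, Ideal.span_le]
    rintro _ ⟨u, v, huv, rfl⟩
    have : φ u = φ v := (AddCon.ker_rel φ).1 (hφ ▸ AddConGen.Rel.of u v huv)
    rw [SetLike.mem_coe, RingHom.mem_ker, map_sub]
    simp [this]

end MonoidAlgebraKernel

section VariableIdeal

variable {σ R : Type*}

theorem isPrime_span_X_image [CommRing R] [IsDomain R] (W : Set σ) :
    (Ideal.span ((X : σ → MvPolynomial σ R) '' W)).IsPrime := by
  classical
  set I := Ideal.span ((X : σ → MvPolynomial σ R) '' W)
  let π : MvPolynomial σ R →ₐ[R] MvPolynomial σ R := aeval fun p => if p ∈ W then 0 else X p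
  have sub_mem : ∀ f, f - π f ∈ I := by
    intro f
    have : (Ideal.Quotient.mkₐ R I).comp π = Ideal.Quotient.mkₐ R I := by
      ext p
      by_cases hp : p ∈ W
      · have : X p ∈ I := Ideal.subset_span ⟨p, hp, rfl⟩
        simpa [π, hp] using (Ideal.Quotient.eq_zero_iff_mem.2 this).symm
      · simp [π, hp]
    exact Ideal.Quotient.eq.1 (DFunLike.congr_fun this f).symm
  have : I = RingHom.ker π := by
    apply le_antisymm
    · refine Ideal.span_le.2 ?_
      rintro _ ⟨p, hp, rfl⟩
      simp [RingHom.mem_ker, π, hp]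
    · intro f hf
      simpa [(RingHom.mem_ker).1 hf] using sub_mem f
  exact this ▸ RingHom.ker_isPrime π

theorem le_weight_of_mem_span_X_image_pow [CommSemiring R] {W : Set σ} {w : σ → ℕ}
    (hw : ∀ p ∈ W, 1 ≤ w p) {k : ℕ} {f : MvPolynomial σ R}
    (hf : f ∈ Ideal.span ((X : σ → MvPolynomial σ R) '' W) ^ k) {v : σ →₀ ℕ}
    (hv : v ∈ f.support) : k ≤ Finsupp.weight w v := by
  classical
  induction k generalizing f v with
  | zero => exact zero_le
  | succ k ih =>
    rw [pow_succ] at hf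
    induction hf using Submodule.mul_induction_on' generalizing v with
    | mem_mul_mem g hg h hh =>
      obtain ⟨a, ha, b, hb, rfl⟩ := Finset.mem_add.1 (support_mul g h hv)
      obtain ⟨p, hp, hbp⟩ := mem_ideal_span_X_image.1 hh b hb
      rw [map_add]
      exact add_le_add (ih hg ha) ((hw p hp).trans (Finsupp.le_weight_of_ne_zero' w hbp))
    | add g _ h _ ihg ihh =>
      exact (Finset.mem_union.1 (support_add hv)).elim (ihg ·) (ihh ·)

end VariableIdeal

section MoveClass

variable {m n : ℕ}

/-- The congruence on exponent vectors generated by the moves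
`x_{a₁b₁} x_{a₂b₂} ~ x_{a₁b₂} x_{a₂b₁}`, one for each minor of `C`. -/
noncomputable def moveCon (C : Set (Minor2 m n)) : AddCon (Fin m × Fin n →₀ ℕ) :=
  addConGen fun u v => ∃ δ ∈ C,
    u = .single (δ.a1, δ.b1) 1 + .single (δ.a2, δ.b2) 1 ∧
    v = .single (δ.a1, δ.b2) 1 + .single (δ.a2, δ.b1) 1

/-- The monoid of monomials modulo the moves along the minors of `C`. -/
abbrev MoveClass (C : Set (Minor2 m n)) : Type :=
  (moveCon C).Quotient

/-- The class of an exponent vector modulo the moves along the minors of `C`. -/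
noncomputable def moveClass (C : Set (Minor2 m n)) : (Fin m × Fin n →₀ ℕ) →+ MoveClass C :=
  (moveCon C).mk'

/-- The class of the variable `x_p` modulo the moves along the minors of `C`. -/
noncomputable def varClass (C : Set (Minor2 m n)) (p : Fin m × Fin n) : MoveClass C :=
  moveClass C (.single p 1)

/-- The quotient map from polynomials to the monoid algebra on move classes. -/
noncomputable def classMap (K : Type*) [Field K] (C : Set (Minor2 m n)) :
    MvPolynomial (Fin m × Fin n) K →ₐ[K] AddMonoidAlgebra K (MoveClass C) :=
  AddMonoidAlgebra.mapDomainAlgHom K K (moveClass C)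

/-- The degree of an exponent vector in the variables `h_i`, `v_j` of the target of `φ`. -/
noncomputable def multiDegree (C : Set (Minor2 m n)) :
    (Fin m × Fin n →₀ ℕ) →+ (Quot (horizAdj C) ⊕ Quot (vertAdj C) →₀ ℕ) :=
  Finsupp.weight fun p => .single (.inl (hClass C p)) 1 + .single (.inr (vClass C p)) 1

variable {K : Type*} [Field K] {C : Set (Minor2 m n)}

theorem moveClass_surjective : Function.Surjective (moveClass C) :=
  AddCon.mk'_surjective

theorem moveClass_single_add (p : Fin m × Fin n) (u : Fin m × Fin n →₀ ℕ) :
    moveClass C (.single p 1 + u) = varClass C p + moveClass C u :=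
  map_add ..

theorem varClass_add_varClass {δ : Minor2 m n} (hδ : δ ∈ C) :
    varClass C (δ.a1, δ.b1) + varClass C (δ.a2, δ.b2) =
      varClass C (δ.a1, δ.b2) + varClass C (δ.a2, δ.b1) :=
  (AddCon.eq _).2 (.of _ _ ⟨δ, hδ, rfl, rfl⟩)

theorem multiDegree_single_one (p : Fin m × Fin n) :
    multiDegree C (.single p 1) =
      .single (.inl (hClass C p)) 1 + .single (.inr (vClass C p)) 1 := by
  simp [multiDegree, Finsupp.weight_single]

theorem minorIdeal_eq_ker_classMap : minorIdeal K C = RingHom.ker (classMap K C) := by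
  have hker : AddCon.ker (moveClass C) = moveCon C := AddCon.mk'_ker _
  rw [classMap, ker_mapDomainAlgHom_of_ker_eq_addConGen hker, minorIdeal]
  congr 1
  ext f
  constructor
  · rintro ⟨δ, hδ, rfl⟩
    exact ⟨_, _, ⟨δ, hδ, rfl, rfl⟩, by
      simp [Minor2.binom, X, monomial, AddMonoidAlgebra.single_mul_single]⟩
  · rintro ⟨_, _, ⟨δ, hδ, rfl, rfl⟩, rfl⟩
    exact ⟨δ, hδ, by
      simp [Minor2.binom, X, monomial, AddMonoidAlgebra.single_mul_single]⟩

theorem X_mul_X_sub_mem_minorIdeal {p q r s : Fin m × Fin n}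
    (h : varClass C p + varClass C q = varClass C r + varClass C s) :
    (X p * X q - X r * X s : MvPolynomial (Fin m × Fin n) K) ∈ minorIdeal K C := by
  simp only [varClass, ← map_add] at h
  rw [minorIdeal_eq_ker_classMap, RingHom.mem_ker, map_sub]
  simp [classMap, X, monomial, AddMonoidAlgebra.single_mul_single, h]

theorem X_mem_varIdeal_iff {W : Set (Fin m × Fin n)} {p : Fin m × Fin n} :
    X p ∈ varIdeal K W ↔ p ∈ W := by
  simp [varIdeal, mem_ideal_span_X_image, support_X, Finsupp.single_apply, -Prod.exists]

theorem phiC_eq_mapDomainAlgHom :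
    phiC K C = AddMonoidAlgebra.mapDomainAlgHom K K (multiDegree C) := by
  refine MvPolynomial.algHom_ext fun p => ?_
  rw [phiC, aeval_X]
  simp [X, monomial, AddMonoidAlgebra.single_mul_single, multiDegree_single_one]

theorem monomial_sub_monomial_mem_toricIdeal {u v : Fin m × Fin n →₀ ℕ}
    (h : multiDegree C u = multiDegree C v) :
    monomial u 1 - monomial v 1 ∈ toricIdeal K C := by
  rw [toricIdeal, phiC_eq_mapDomainAlgHom, RingHom.mem_ker, map_sub]
  simp [monomial, h]

theorem hClass_fst_eq {δ : Minor2 m n} (hδ : δ ∈ C) :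
    hClass C (δ.a1, δ.b1) = hClass C (δ.a1, δ.b2) ∧
      hClass C (δ.a2, δ.b1) = hClass C (δ.a2, δ.b2) :=
  ⟨Quot.sound ⟨δ, hδ, .inl rfl⟩, Quot.sound ⟨δ, hδ, .inr rfl⟩⟩

theorem vClass_snd_eq {δ : Minor2 m n} (hδ : δ ∈ C) :
    vClass C (δ.a1, δ.b1) = vClass C (δ.a2, δ.b1) ∧
      vClass C (δ.a1, δ.b2) = vClass C (δ.a2, δ.b2) :=
  ⟨Quot.sound ⟨δ, hδ, .inl rfl⟩, Quot.sound ⟨δ, hδ, .inr rfl⟩⟩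

theorem moveCon_le_ker_multiDegree : moveCon C ≤ AddCon.ker (multiDegree C) := by
  refine AddCon.addConGen_le.2 ?_
  rintro _ _ ⟨δ, hδ, rfl, rfl⟩
  simp only [AddCon.ker_rel, map_add, multiDegree_single_one, (hClass_fst_eq hδ).1,
    (hClass_fst_eq hδ).2, (vClass_snd_eq hδ).1, (vClass_snd_eq hδ).2]
  abel

/-- The multidegree of a move class. -/
noncomputable def classDegree (C : Set (Minor2 m n)) :
    MoveClass C →+ (Quot (horizAdj C) ⊕ Quot (vertAdj C) →₀ ℕ) :=
  AddCon.lift _ (multiDegree C) moveCon_le_ker_multiDegree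

theorem classDegree_moveClass (u : Fin m × Fin n →₀ ℕ) :
    classDegree C (moveClass C u) = multiDegree C u :=
  rfl

theorem phiC_eq_comp_classMap :
    phiC K C = (AddMonoidAlgebra.mapDomainAlgHom K K (classDegree C)).comp (classMap K C) := by
  rw [phiC_eq_mapDomainAlgHom, classMap, ← AddMonoidAlgebra.mapDomainAlgHom_comp]
  rfl

variable (K C) in
theorem minorIdeal_le_toricIdeal : minorIdeal K C ≤ toricIdeal K C := by
  intro f hf
  rw [minorIdeal_eq_ker_classMap, RingHom.mem_ker] at hf
  rw [toricIdeal, RingHom.mem_ker, phiC_eq_comp_classMap, AlgHom.comp_apply, hf, map_zero]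

theorem mem_minorIdeal_of_injOn_classDegree {f : MvPolynomial (Fin m × Fin n) K}
    (hf : f ∈ toricIdeal K C)
    (hinj : Set.InjOn (classDegree C) (classMap K C f).coeff.support) :
    f ∈ minorIdeal K C := by
  rw [toricIdeal, RingHom.mem_ker, phiC_eq_comp_classMap] at hf
  have hmap : (classMap K C f).coeff.mapDomain (classDegree C) = 0 :=
    congrArg AddMonoidAlgebra.coeff hf
  have hcoeff : (classMap K C f).coeff = 0 :=
    Finsupp.mapDomain_injOn _ hinj (Set.Subset.refl _) (by simp)
      (hmap.trans Finsupp.mapDomain_zero.symm)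
  rw [minorIdeal_eq_ker_classMap, RingHom.mem_ker]
  exact AddMonoidAlgebra.coeff_injective hcoeff

theorem exists_mem_support_moveClass_eq {f : MvPolynomial (Fin m × Fin n) K} {q : MoveClass C}
    (hq : q ∈ (classMap K C f).coeff.support) : ∃ u ∈ f.support, moveClass C u = q := by
  classical
  exact Finset.mem_image.1 (Finsupp.mapDomain_support hq)

theorem multiDegree_inl_ne_zero_iff {y : Fin m × Fin n →₀ ℕ} {c : Quot (horizAdj C)} :
    multiDegree C y (.inl c) ≠ 0 ↔ ∃ r, y r ≠ 0 ∧ hClass C r = c := by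
  classical
  simp [multiDegree, Finsupp.weight_eq_sum, Finsupp.single_apply, and_comm]

theorem multiDegree_inr_ne_zero_iff {y : Fin m × Fin n →₀ ℕ} {c : Quot (vertAdj C)} :
    multiDegree C y (.inr c) ≠ 0 ↔ ∃ r, y r ≠ 0 ∧ vClass C r = c := by
  classical
  simp [multiDegree, Finsupp.weight_eq_sum, Finsupp.single_apply, and_comm]

theorem exists_hClass_eq {y z : Fin m × Fin n →₀ ℕ} {p : Fin m × Fin n}
    (h : multiDegree C y = multiDegree C z) (hp : z p ≠ 0) :
    ∃ r, y r ≠ 0 ∧ hClass C r = hClass C p :=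
  multiDegree_inl_ne_zero_iff.1 (h ▸ multiDegree_inl_ne_zero_iff.2 ⟨p, hp, rfl⟩)

theorem exists_vClass_eq {y z : Fin m × Fin n →₀ ℕ} {p : Fin m × Fin n}
    (h : multiDegree C y = multiDegree C z) (hp : z p ≠ 0) :
    ∃ r, y r ≠ 0 ∧ vClass C r = vClass C p :=
  multiDegree_inr_ne_zero_iff.1 (h ▸ multiDegree_inr_ne_zero_iff.2 ⟨p, hp, rfl⟩)

theorem eq_zero_of_multiDegree_eq_zero {y : Fin m × Fin n →₀ ℕ} (h : multiDegree C y = 0) :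
    y = 0 := by
  ext p
  by_contra hp
  obtain ⟨r, hr, -⟩ := exists_hClass_eq (C := C) (y := 0) (z := y) (by simp [h]) hp
  exact hr rfl

theorem eq_or_of_hClass_eq {p q : Fin m × Fin n} (h : hClass C p = hClass C q) :
    p = q ∨ p ∈ vertexSetOf C ∧ q ∈ vertexSetOf C ∧ p.1 = q.1 := by
  replace h := Quot.eqvGen_exact h
  induction h with
  | rel p q h =>
    obtain ⟨δ, hδ, h | h⟩ := h <;> obtain ⟨rfl, rfl⟩ | ⟨rfl, rfl⟩ := Set.pair_eq_pair_iff.1 h <;>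
      refine .inr ⟨Set.mem_biUnion hδ ?_, Set.mem_biUnion hδ ?_, rfl⟩ <;>
      simp [Minor2.vertexSet]
  | refl p => exact .inl rfl
  | symm p q _ ih => grind
  | trans p q r _ _ ih₁ ih₂ => grind

theorem eq_or_of_vClass_eq {p q : Fin m × Fin n} (h : vClass C p = vClass C q) :
    p = q ∨ p ∈ vertexSetOf C ∧ q ∈ vertexSetOf C ∧ p.2 = q.2 := by
  replace h := Quot.eqvGen_exact h
  induction h with
  | rel p q h =>
    obtain ⟨δ, hδ, h | h⟩ := h <;> obtain ⟨rfl, rfl⟩ | ⟨rfl, rfl⟩ := Set.pair_eq_pair_iff.1 h <;>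
      refine .inr ⟨Set.mem_biUnion hδ ?_, Set.mem_biUnion hδ ?_, rfl⟩ <;>
      simp [Minor2.vertexSet]
  | refl p => exact .inl rfl
  | symm p q _ ih => grind
  | trans p q r _ _ ih₁ ih₂ => grind

end MoveClass

namespace Minor2

/-- A corner minor: its upper left vertex is the upper left entry of the matrix. -/
def IsCorner {m n : ℕ} [NeZero m] [NeZero n] (δ : Minor2 m n) : Prop :=
  δ.a1 = 0 ∧ δ.b1 = 0

end Minor2

theorem exists_eq_single_add {σ : Type*} {y : σ →₀ ℕ} {p : σ} (hp : y p ≠ 0) :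
    ∃ w, y = .single p 1 + w :=
  le_iff_exists_add.1 (Finsupp.single_le_iff.2 (Nat.one_le_iff_ne_zero.2 hp))

theorem exists_eq_single_add_single_add {σ : Type*} {y : σ →₀ ℕ} {p q : σ}
    (hpq : p ≠ q) (hp : y p ≠ 0) (hq : y q ≠ 0) :
    ∃ w, y = .single p 1 + (.single q 1 + w) := by
  obtain ⟨w, rfl⟩ := exists_eq_single_add hp
  obtain ⟨w, rfl⟩ := exists_eq_single_add (y := w) (p := q) (by simpa [hpq] using hq)
  exact ⟨w, rfl⟩

section Corner

variable {m n : ℕ} [NeZero m] [NeZero n] {C : Set (Minor2 m n)}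

theorem varClass_zero_add (hC : ∀ δ ∈ C, δ.IsCorner) {p : Fin m × Fin n}
    (hp : p ∈ vertexSetOf C) :
    varClass C 0 + varClass C p = varClass C (p.1, 0) + varClass C (0, p.2) := by
  obtain ⟨δ, hδ, hp⟩ := Set.mem_iUnion₂.1 hp
  have h := varClass_add_varClass hδ
  obtain ⟨h₁, h₂⟩ := hC δ hδ
  rw [h₁, h₂] at h
  rcases hp with rfl | rfl | rfl | rfl
  · simp only [h₁, h₂]; rfl
  · simp only [h₁]; rfl
  · simp only [h₂]; exact add_comm ..
  · exact h.trans (add_comm ..)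

theorem exists_two_corners_add_eq (hC : ∀ δ ∈ C, δ.IsCorner) {y z : Fin m × Fin n →₀ ℕ}
    (h : multiDegree C y = multiDegree C z) {p : Fin m × Fin n} (hp : z p ≠ 0) :
    ∃ y', varClass C 0 + (varClass C 0 + moveClass C y) =
      varClass C 0 + (varClass C p + moveClass C y') := by
  by_cases hyp : y p = 0
  · obtain ⟨r, hr, hrp⟩ := exists_hClass_eq h hp
    obtain ⟨s, hs, hsp⟩ := exists_vClass_eq h hp
    obtain ⟨hrV, hpV, hrp⟩ := (eq_or_of_hClass_eq hrp).resolve_left (by grind)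
    obtain ⟨hsV, -, hsp⟩ := (eq_or_of_vClass_eq hsp).resolve_left (by grind)
    have hrs : r ≠ s := by grind
    obtain ⟨w, rfl⟩ := exists_eq_single_add_single_add hrs hr hs
    refine ⟨.single (0, r.2) 1 + (.single (s.1, 0) 1 + w), ?_⟩
    have hr := varClass_zero_add hC hrV
    have hs := varClass_zero_add hC hsV
    have hp := varClass_zero_add hC hpV
    rw [hrp] at hr
    rw [hsp] at hs
    simp only [moveClass_single_add]
    -- `x₀₀² x_{il} x_{kj} ~ x_{i0} x_{0l} x_{k0} x_{0j} ~ x₀₀ x_{ij} x_{0l} x_{k0}`, `p = (i, j)`.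
    grind
  · obtain ⟨w, rfl⟩ := exists_eq_single_add hyp
    exact ⟨.single 0 1 + w, by simp only [moveClass_single_add]; abel⟩

theorem exists_corner_add_eq (hC : ∀ δ ∈ C, δ.IsCorner) {y z : Fin m × Fin n →₀ ℕ}
    (h : multiDegree C y = multiDegree C (.single 0 1 + z)) (hy : y 0 = 0) :
    ∃ g, z g ≠ 0 ∧ ∃ y', varClass C 0 + moveClass C y =
      varClass C 0 + (varClass C g + moveClass C y') := by
  obtain ⟨s, hs, hs0⟩ := exists_vClass_eq h (p := 0) (by simp)
  obtain ⟨-, -, hs0⟩ := (eq_or_of_vClass_eq hs0).resolve_left (by grind)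
  obtain ⟨g, hg, hgs⟩ := exists_hClass_eq h.symm hs
  have hgs' := eq_or_of_hClass_eq hgs
  have hg0 : g ≠ 0 := by grind
  have hzg : z g ≠ 0 := by simpa [Finsupp.single_apply, hg0.symm] using hg
  refine ⟨g, hzg, ?_⟩
  by_cases hyg : y g = 0
  · obtain ⟨hgV, -, hgs⟩ := hgs'.resolve_left (by grind)
    obtain ⟨r, hr, hrg⟩ := exists_vClass_eq h hg
    obtain ⟨hrV, -, hrg⟩ := (eq_or_of_vClass_eq hrg).resolve_left (by grind)
    have hrs : r ≠ s := by grind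
    obtain ⟨w, rfl⟩ := exists_eq_single_add_single_add hrs hr hs
    refine ⟨.single (r.1, 0) 1 + w, ?_⟩
    have hr := varClass_zero_add hC hrV
    have hg := varClass_zero_add hC hgV
    have hs : s = (s.1, 0) := Prod.ext rfl hs0
    rw [hrg] at hr
    rw [hgs, ← hs] at hg
    simp only [moveClass_single_add]
    -- `x₀₀ x_{kj} x_{i0} ~ x_{k0} x_{0j} x_{i0} ~ x₀₀ x_{ij} x_{k0}`, where `g = (i, j)`.
    grind
  · obtain ⟨w, rfl⟩ := exists_eq_single_add hyg
    exact ⟨w, by rw [moveClass_single_add]⟩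

theorem varClass_zero_add_moveClass (hC : ∀ δ ∈ C, δ.IsCorner) {y z : Fin m × Fin n →₀ ℕ}
    (h : multiDegree C y = multiDegree C (.single 0 1 + z)) :
    varClass C 0 + moveClass C y = varClass C 0 + (varClass C 0 + moveClass C z) := by
  induction hd : z.degree using Nat.strong_induction_on generalizing y z with
  | _ d ih =>
  have remove : ∀ g y', z g ≠ 0 → varClass C 0 + moveClass C y =
      varClass C 0 + (varClass C g + moveClass C y') →
      varClass C 0 + moveClass C y = varClass C 0 + (varClass C 0 + moveClass C z) := by
    intro g y' hg hy
    obtain ⟨z', rfl⟩ := exists_eq_single_add hg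
    have hdeg : multiDegree C y' = multiDegree C (.single 0 1 + z') := by
      have := congrArg (classDegree C) hy
      simp only [varClass, map_add, classDegree_moveClass, h] at this ⊢
      simpa [add_left_comm] using this.symm
    have := ih _ (by simp [← hd]) hdeg rfl
    rw [hy, moveClass_single_add, add_left_comm, this]
    abel
  by_cases hy : y 0 = 0
  · obtain ⟨g, hg, y', hy'⟩ := exists_corner_add_eq hC h hy
    exact remove g y' hg hy'
  · obtain ⟨y, rfl⟩ := exists_eq_single_add hy
    have h : multiDegree C y = multiDegree C z := by simpa using h
    by_cases hz : z = 0
    · rw [eq_zero_of_multiDegree_eq_zero (h.trans (by simp [hz])), hz, moveClass_single_add]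
    · obtain ⟨g, hg⟩ := Finsupp.ne_iff.1 hz
      obtain ⟨y', hy'⟩ := exists_two_corners_add_eq hC h hg
      exact remove g y' hg (by rwa [moveClass_single_add])

variable {K : Type*} [Field K]

theorem X_zero_mul_X_zero_mul_mem_minorIdeal (hC : ∀ δ ∈ C, δ.IsCorner)
    {f : MvPolynomial (Fin m × Fin n) K} (hf : f ∈ toricIdeal K C) :
    X 0 * (X 0 * f) ∈ minorIdeal K C := by
  refine mem_minorIdeal_of_injOn_classDegree
    (Ideal.mul_mem_left _ _ (Ideal.mul_mem_left _ _ hf)) fun q hq q' hq' h => ?_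
  obtain ⟨u, hu, rfl⟩ := exists_mem_support_moveClass_eq hq
  obtain ⟨v, hv, rfl⟩ := exists_mem_support_moveClass_eq hq'
  simp only [support_X_mul, Finset.mem_map, addLeftEmbedding_apply, exists_exists_and_eq_and]
    at hu hv
  obtain ⟨u, -, rfl⟩ := hu
  obtain ⟨v, -, rfl⟩ := hv
  have h : multiDegree C (.single 0 1 + u) = multiDegree C (.single 0 1 + v) := by
    simpa [classDegree_moveClass] using h
  simpa only [moveClass_single_add] using varClass_zero_add_moveClass hC h

theorem toricIdeal_le_of_X_zero_notMem (hC : ∀ δ ∈ C, δ.IsCorner)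
    {Q : Ideal (MvPolynomial (Fin m × Fin n) K)} (hQ : Q.IsPrime) (hIQ : minorIdeal K C ≤ Q)
    (h0 : X 0 ∉ Q) : toricIdeal K C ≤ Q := fun _ hf =>
  have h := hIQ (X_zero_mul_X_zero_mul_mem_minorIdeal hC hf)
  (hQ.mem_or_mem ((hQ.mem_or_mem h).resolve_left h0)).resolve_left h0

theorem toricIdeal_empty : toricIdeal K (∅ : Set (Minor2 m n)) = ⊥ :=
  le_bot_iff.1 <| toricIdeal_le_of_X_zero_notMem (by simp) Ideal.isPrime_bot
    (by simp [minorIdeal]) (by simp)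

theorem toricIdeal_mem_minimalPrimes (hC : ∀ δ ∈ C, δ.IsCorner) :
    toricIdeal K C ∈ (minorIdeal K C).minimalPrimes := by
  refine ⟨⟨RingHom.ker_isPrime _, minorIdeal_le_toricIdeal K C⟩, fun Q ⟨hQ, hIQ⟩ hQJ => ?_⟩
  refine toricIdeal_le_of_X_zero_notMem hC hQ hIQ fun h => ?_
  simpa [toricIdeal, RingHom.mem_ker, phiC] using hQJ h

end Corner

section PW

variable {m n : ℕ} (K : Type*) [Field K] (C : Set (Minor2 m n))

theorem admissible_empty : Admissible C ∅ := by
  simp [Admissible]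

theorem PW_empty : PW K C ∅ = toricIdeal K C := by
  simp [PW, varIdeal, minorsAvoiding]

end PW

section Cover

variable {m n : ℕ}

/-- The lower right vertices of the minors of `C`. A corner minor is determined by this vertex
`(i, j)`; we regard it as an edge joining row `i` to column `j` in a bipartite graph. -/
def farCorners (C : Set (Minor2 m n)) : Set (Fin m × Fin n) :=
  (fun δ => (δ.a2, δ.b2)) '' C

/-- `P.1 ⊔ P.2` is a vertex cover of the bipartite graph with edge set `farCorners C`. -/
def IsCover (C : Set (Minor2 m n)) (P : Set (Fin m) × Set (Fin n)) : Prop :=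
  ∀ e ∈ farCorners C, e.1 ∈ P.1 ∨ e.2 ∈ P.2

/-- The corner variable together with the variables of the first column and first row whose
row, respectively column, belongs to `P`. For a minimal cover `P` they generate a monomial prime
`P_W(C)` that is minimal over `I(C)` unless it contains `J_C`. -/
def coverVars [NeZero m] [NeZero n] (P : Set (Fin m) × Set (Fin n)) : Set (Fin m × Fin n) :=
  {p | p = 0 ∨ p.2 = 0 ∧ p.1 ∈ P.1 ∨ p.1 = 0 ∧ p.2 ∈ P.2}

variable {C : Set (Minor2 m n)} {P : Set (Fin m) × Set (Fin n)}

theorem exists_minimal_isCover_le (hP : IsCover C P) : ∃ P' ≤ P, Minimal (IsCover C) P' :=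
  (Set.toFinite {P | IsCover C P}).exists_le_minimal hP

theorem exists_farCorner_of_mem_fst (hP : Minimal (IsCover C) P) {i : Fin m} (hi : i ∈ P.1) :
    ∃ j ∉ P.2, (i, j) ∈ farCorners C := by
  by_contra! h
  have hcover : IsCover C (P.1 \ {i}, P.2) := fun e he => by
    by_cases heP : e.2 ∈ P.2
    · exact .inr heP
    · have hei : e.1 ≠ i := fun hei => h e.2 heP (hei ▸ he)
      exact .inl ⟨(hP.prop e he).resolve_right heP, hei⟩
  exact ((hP.le_of_le hcover ⟨Set.sdiff_subset, le_rfl⟩).1 hi).2 rfl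

theorem exists_farCorner_of_mem_snd (hP : Minimal (IsCover C) P) {j : Fin n} (hj : j ∈ P.2) :
    ∃ i ∉ P.1, (i, j) ∈ farCorners C := by
  by_contra! h
  have hcover : IsCover C (P.1, P.2 \ {j}) := fun e he => by
    by_cases heP : e.1 ∈ P.1
    · exact .inl heP
    · have hej : e.2 ≠ j := fun hej => h e.1 heP (hej ▸ he)
      exact .inr ⟨(hP.prop e he).resolve_left heP, hej⟩
  exact ((hP.le_of_le hcover ⟨le_rfl, Set.sdiff_subset⟩).2 hj).2 rfl

theorem farCorners_subset_vertexSetOf : farCorners C ⊆ vertexSetOf C := by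
  rintro _ ⟨δ, hδ, rfl⟩
  exact Set.mem_biUnion hδ (by simp [Minor2.vertexSet])

theorem farCorner_fst_ne_zero [NeZero m] {e : Fin m × Fin n} (he : e ∈ farCorners C) :
    e.1 ≠ 0 := by
  obtain ⟨δ, -, rfl⟩ := he
  exact ((Fin.zero_le _).trans_lt δ.ha).ne'

theorem farCorner_snd_ne_zero [NeZero n] {e : Fin m × Fin n} (he : e ∈ farCorners C) :
    e.2 ≠ 0 := by
  obtain ⟨δ, -, rfl⟩ := he
  exact ((Fin.zero_le _).trans_lt δ.hb).ne'

variable [NeZero m] [NeZero n]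

theorem legs_mem_vertexSetOf (hC : ∀ δ ∈ C, δ.IsCorner) {e : Fin m × Fin n}
    (he : e ∈ farCorners C) : (e.1, 0) ∈ vertexSetOf C ∧ (0, e.2) ∈ vertexSetOf C := by
  obtain ⟨δ, hδ, rfl⟩ := he
  obtain ⟨h₁, h₂⟩ := hC δ hδ
  exact ⟨Set.mem_biUnion hδ (by simp [Minor2.vertexSet, h₂]),
    Set.mem_biUnion hδ (by simp [Minor2.vertexSet, h₁])⟩

theorem varClass_zero_add_farCorner (hC : ∀ δ ∈ C, δ.IsCorner) {e : Fin m × Fin n}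
    (he : e ∈ farCorners C) :
    varClass C 0 + varClass C e = varClass C (e.1, 0) + varClass C (0, e.2) :=
  varClass_zero_add hC (farCorners_subset_vertexSetOf he)

theorem exists_private_farCorner (hC : ∀ δ ∈ C, δ.IsCorner) (hP : Minimal (IsCover C) P)
    {p : Fin m × Fin n} (hp : p ∈ coverVars P) (hp0 : p ≠ 0) :
    ∃ e ∈ farCorners C, ∃ q ∉ coverVars P, q ∉ farCorners C ∧
      varClass C 0 + varClass C e = varClass C p + varClass C q := by
  obtain ⟨i, j⟩ := p
  rcases hp with hp | ⟨rfl : j = 0, hi : i ∈ P.1⟩ | ⟨rfl : i = 0, hj : j ∈ P.2⟩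
  · exact absurd hp hp0
  · obtain ⟨j, hj, he⟩ := exists_farCorner_of_mem_fst hP hi
    have hj0 : j ≠ 0 := farCorner_snd_ne_zero he
    refine ⟨_, he, (0, j), by simp [coverVars, hj, hj0], fun h => ?_,
      varClass_zero_add_farCorner hC he⟩
    exact farCorner_fst_ne_zero h rfl
  · obtain ⟨i, hi, he⟩ := exists_farCorner_of_mem_snd hP hj
    have hi0 : i ≠ 0 := farCorner_fst_ne_zero he
    refine ⟨_, he, (i, 0), by simp [coverVars, hi, hi0], fun h => ?_,
      (varClass_zero_add_farCorner hC he).trans (add_comm ..)⟩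
    exact farCorner_snd_ne_zero h rfl

theorem minorIdeal_le_varIdeal_coverVars (K : Type*) [Field K] (hC : ∀ δ ∈ C, δ.IsCorner)
    (hP : IsCover C P) : minorIdeal K C ≤ varIdeal K (coverVars P) := by
  have X_mem : ∀ p ∈ coverVars P, X p ∈ varIdeal K (coverVars P) := fun p hp =>
    Ideal.subset_span ⟨p, hp, rfl⟩
  refine Ideal.span_le.2 ?_
  rintro _ ⟨δ, hδ, rfl⟩
  rw [Minor2.binom, (hC δ hδ).1, (hC δ hδ).2]
  refine sub_mem (Ideal.mul_mem_right _ _ (X_mem _ (.inl rfl))) ?_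
  rcases hP _ ⟨δ, hδ, rfl⟩ with h | h
  · exact Ideal.mul_mem_left _ _ (X_mem _ (.inr (.inl ⟨rfl, h⟩)))
  · exact Ideal.mul_mem_right _ _ (X_mem _ (.inr (.inr ⟨rfl, h⟩)))

theorem admissible_coverVars (hC : ∀ δ ∈ C, δ.IsCorner) (hP : Minimal (IsCover C) P)
    (hne : C.Nonempty) : Admissible C (coverVars P) := by
  refine ⟨?_, fun δ hδ => .inr ?_⟩
  · rintro ⟨i, j⟩ (h0 | ⟨rfl : j = 0, hi : i ∈ P.1⟩ | ⟨rfl : i = 0, hj : j ∈ P.2⟩)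
    · obtain ⟨δ, hδ⟩ := hne
      obtain ⟨h₁, h₂⟩ := hC δ hδ
      exact Set.mem_biUnion hδ (.inl (by rw [h0, h₁, h₂]; rfl))
    · obtain ⟨j, -, he⟩ := exists_farCorner_of_mem_fst hP hi
      exact (legs_mem_vertexSetOf hC he).1
    · obtain ⟨i, -, he⟩ := exists_farCorner_of_mem_snd hP hj
      exact (legs_mem_vertexSetOf hC he).2
  · obtain ⟨h₁, h₂⟩ := hC δ hδ
    rcases hP.prop _ ⟨δ, hδ, rfl⟩ with h | h
    · exact ⟨0, (δ.a2, 0), .inl rfl, .inr (.inl ⟨rfl, h⟩), .inl (.inl (by rw [h₁, h₂]; rfl))⟩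
    · exact ⟨0, (0, δ.b2), .inl rfl, .inr (.inr ⟨rfl, h⟩), .inr (.inl (by rw [h₁, h₂]; rfl))⟩

end Cover

section CoverPrime

variable {m n : ℕ} [NeZero m] [NeZero n] {K : Type*} [Field K] {C : Set (Minor2 m n)}
  {P : Set (Fin m) × Set (Fin n)}

theorem PW_coverVars (hC : ∀ δ ∈ C, δ.IsCorner) :
    PW K C (coverVars P) = varIdeal K (coverVars P) := by
  have havoid : minorsAvoiding C (coverVars P) = ∅ := by
    refine Set.eq_empty_of_forall_notMem fun δ ⟨hδ, h⟩ => ?_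
    obtain ⟨h₁, h₂⟩ := hC δ hδ
    exact Set.eq_empty_iff_forall_notMem.1 h 0 ⟨.inl (by rw [h₁, h₂]; rfl), .inl rfl⟩
  rw [PW, havoid, toricIdeal_empty]
  exact sup_bot_eq _

theorem varIdeal_coverVars_mem_minimalPrimes (hC : ∀ δ ∈ C, δ.IsCorner)
    (hP : Minimal (IsCover C) P) (hJ : ¬ toricIdeal K C ≤ varIdeal K (coverVars P)) :
    varIdeal K (coverVars P) ∈ (minorIdeal K C).minimalPrimes := by
  refine ⟨⟨isPrime_span_X_image _, minorIdeal_le_varIdeal_coverVars K hC hP.prop⟩,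
    fun Q ⟨hQ, hIQ⟩ hQP => Ideal.span_le.2 ?_⟩
  rintro _ ⟨p, hp, rfl⟩
  have hX0 : X 0 ∈ Q := by
    by_contra h0
    exact hJ ((toricIdeal_le_of_X_zero_notMem hC hQ hIQ h0).trans hQP)
  by_cases hp0 : p = 0
  · rwa [hp0]
  · obtain ⟨e, -, q, hq, -, heq⟩ := exists_private_farCorner hC hP hp hp0
    have hpq : X p * X q ∈ Q := by
      simpa using Q.sub_mem (Q.mul_mem_right (X e) hX0) (hIQ (X_mul_X_sub_mem_minorIdeal heq))
    exact (hQ.mem_or_mem hpq).resolve_right fun h => hq (X_mem_varIdeal_iff.1 (hQP h))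

end CoverPrime

section CoverWeight

variable {m n : ℕ} [NeZero m] [NeZero n] {C : Set (Minor2 m n)} {P : Set (Fin m) × Set (Fin n)}

/-- The positions of weight one: the variables of `coverVars P`, and those far corners both of
whose row and column belong to `P`. The latter make the weight invariant under moves. -/
def coverSupport (C : Set (Minor2 m n)) (P : Set (Fin m) × Set (Fin n)) : Set (Fin m × Fin n) :=
  coverVars P ∪ {e ∈ farCorners C | e.1 ∈ P.1 ∧ e.2 ∈ P.2}

/-- The number of factors of a monomial that lie in `coverSupport C P`. -/
noncomputable def coverWeight (C : Set (Minor2 m n)) (P : Set (Fin m) × Set (Fin n)) :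
    (Fin m × Fin n →₀ ℕ) →+ ℕ :=
  Finsupp.weight ((coverSupport C P).indicator 1)

theorem coverWeight_single_zero : coverWeight C P (.single 0 1) = 1 := by
  have h : (0 : Fin m × Fin n) ∈ coverSupport C P := .inl (.inl rfl)
  simp [coverWeight, Finsupp.weight_single, h]

theorem coverWeight_eq_zero_iff {u : Fin m × Fin n →₀ ℕ} :
    coverWeight C P u = 0 ↔ ∀ p ∈ coverSupport C P, u p = 0 := by
  classical
  simp [coverWeight, Finsupp.weight_eq_sum, Set.indicator_apply]

theorem coverWeight_eq_of_moveClass_eq (hC : ∀ δ ∈ C, δ.IsCorner) (hP : IsCover C P)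
    {u v : Fin m × Fin n →₀ ℕ} (h : moveClass C u = moveClass C v) :
    coverWeight C P u = coverWeight C P v := by
  classical
  have hle : moveCon C ≤ AddCon.ker (coverWeight C P) := by
    refine AddCon.addConGen_le.2 ?_
    rintro _ _ ⟨δ, hδ, rfl, rfl⟩
    have he : (δ.a2, δ.b2) ∈ farCorners C := ⟨δ, hδ, rfl⟩
    have he₁ := farCorner_fst_ne_zero he
    have he₂ := farCorner_snd_ne_zero he
    have h0 : (0, 0) ∈ coverSupport C P := .inl (.inl rfl)
    have hrow : (δ.a2, 0) ∈ coverSupport C P ↔ δ.a2 ∈ P.1 := by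
      have : (δ.a2, 0) ∉ farCorners C := fun h => farCorner_snd_ne_zero h rfl
      simp [coverSupport, coverVars, this, he₁]
    have hcol : (0, δ.b2) ∈ coverSupport C P ↔ δ.b2 ∈ P.2 := by
      have : (0, δ.b2) ∉ farCorners C := fun h => farCorner_fst_ne_zero h rfl
      simp [coverSupport, coverVars, this, he₂]
    have hfar : (δ.a2, δ.b2) ∈ coverSupport C P ↔ δ.a2 ∈ P.1 ∧ δ.b2 ∈ P.2 := by
      simp [coverSupport, coverVars, he, he₁, he₂]
    have hcover : δ.a2 ∈ P.1 ∨ δ.b2 ∈ P.2 := hP _ he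
    simp only [AddCon.ker_rel, map_add, coverWeight, Finsupp.weight_single, (hC δ hδ).1,
      (hC δ hδ).2, Set.indicator_apply, h0, hrow, hcol, hfar, Pi.one_apply]
    grind
  exact hle ((AddCon.eq _).1 h)

/-- A set `T` of rows is exposed by `u` if each `k ∈ T` can be moved into the first column: the
monomial `x_{00} u` is equivalent to a multiple of `x_{00} x_{k0}`, by moves that do not consume
the factors of `u` lying outside the rows of `T`. -/
def RowsExposed (C : Set (Minor2 m n)) (u : Fin m × Fin n →₀ ℕ) (T : Set (Fin m)) : Prop :=
  ∀ k ∈ T, ∃ z, (∀ p, p.1 ∉ T → u p ≤ z p) ∧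
    varClass C 0 + moveClass C u = varClass C 0 + (varClass C (k, 0) + moveClass C z)

theorem rowsExposed_setOf_ne_zero (u : Fin m × Fin n →₀ ℕ) :
    RowsExposed C u {k | u (k, 0) ≠ 0} := by
  intro k hk
  obtain ⟨z, rfl⟩ := exists_eq_single_add hk
  refine ⟨z, fun p hp => ?_, by rw [moveClass_single_add]⟩
  have hpk : (k, 0) ≠ p := by rintro rfl; exact hp hk
  simp [hpk]

theorem RowsExposed.insert (hC : ∀ δ ∈ C, δ.IsCorner) {u : Fin m × Fin n →₀ ℕ} {T : Set (Fin m)}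
    (hT : RowsExposed C u T) {p : Fin m × Fin n} (hp : p ∈ vertexSetOf C) (hup : u p ≠ 0)
    (hpT : p.1 ∉ T) {k : Fin m} (hk : k ∈ T) (hkp : (k, p.2) ∈ farCorners C) :
    RowsExposed C u (Insert.insert p.1 T) := by
  rintro i (rfl | hi)
  · obtain ⟨z, hz, heq⟩ := hT k hk
    obtain ⟨z, rfl⟩ := exists_eq_single_add ((Nat.pos_of_ne_zero hup).trans_le (hz p hpT)).ne'
    refine ⟨.single (k, p.2) 1 + z, fun r hr => ?_, ?_⟩
    · have hrp : p ≠ r := by rintro rfl; exact hr (.inl rfl)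
      have := hz r fun h => hr (.inr h)
      simp only [Finsupp.add_apply, Finsupp.single_apply, hrp, if_false] at this ⊢
      omega
    · have hp := varClass_zero_add hC hp
      have hkp := varClass_zero_add_farCorner hC hkp
      simp only [moveClass_single_add] at heq ⊢
      -- `x₀₀ x_{k0} x_{ij} ~ x_{k0} x_{i0} x_{0j} ~ x₀₀ x_{i0} x_{kj}`, where `p = (i, j)`.
      grind
  · obtain ⟨z, hz, heq⟩ := hT i hi
    exact ⟨z, fun r hr => hz r fun h => hr (.inr h), heq⟩

theorem exists_minimal_isCover_coverWeight_eq_zero (hC : ∀ δ ∈ C, δ.IsCorner)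
    {u : Fin m × Fin n →₀ ℕ}
    (hu : ∀ z, varClass C 0 + moveClass C u ≠ varClass C 0 + (varClass C 0 + moveClass C z)) :
    ∃ P, Minimal (IsCover C) P ∧ coverWeight C P u = 0 := by
  obtain ⟨T, hle, hT⟩ := (Set.toFinite {T | RowsExposed C u T}).exists_le_maximal
    (rowsExposed_setOf_ne_zero u)
  have hcover : IsCover C (Tᶜ, {l | ∃ k ∈ T, (k, l) ∈ farCorners C}) := fun e he => by
    by_cases heT : e.1 ∈ T
    · exact .inr ⟨e.1, heT, he⟩
    · exact .inl heT
  obtain ⟨P, ⟨hP₁, hP₂⟩, hP⟩ := exists_minimal_isCover_le hcover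
  have h0T : (0 : Fin m) ∉ T := fun h0 => by
    obtain ⟨z, -, hz⟩ := hT.prop 0 h0
    exact hu z hz
  refine ⟨P, hP, coverWeight_eq_zero_iff.2 fun p hp => ?_⟩
  by_contra hup
  rcases hp with (rfl | ⟨h0, hp⟩ | ⟨h0, hp⟩) | ⟨he, hp, hp'⟩
  · obtain ⟨z, rfl⟩ := exists_eq_single_add hup
    exact hu z (by rw [moveClass_single_add])
  · exact hP₁ hp (hle (by rwa [← h0]))
  · obtain ⟨k, hk, hkp⟩ := hP₂ hp
    obtain ⟨z, hz, heq⟩ := hT.prop k hk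
    obtain ⟨z, rfl⟩ := exists_eq_single_add
      ((Nat.pos_of_ne_zero hup).trans_le (hz p (h0 ▸ h0T))).ne'
    refine hu (.single (k, p.2) 1 + z) ?_
    have hp : p = (0, p.2) := Prod.ext h0 rfl
    have := varClass_zero_add_farCorner hC hkp
    rw [heq, moveClass_single_add, moveClass_single_add, hp]
    grind
  · obtain ⟨k, hk, hkp⟩ := hP₂ hp'
    have hins := hT.prop.insert hC (farCorners_subset_vertexSetOf he) hup (hP₁ hp) hk hkp
    exact hP₁ hp (hT.le_of_ge hins (Set.subset_insert _ _) (.inl rfl))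

theorem eq_of_toricIdeal_le {K : Type*} [Field K]
    (hJ : toricIdeal K C ≤ varIdeal K (coverVars P)) {u v : Fin m × Fin n →₀ ℕ}
    (hu : ∀ p ∈ coverVars P, u p = 0) (h : multiDegree C u = multiDegree C v) : u = v := by
  classical
  by_contra huv
  have hmem := hJ (monomial_sub_monomial_mem_toricIdeal (K := K) h)
  have hsupp : u ∈ (monomial u (1 : K) - monomial v 1).support := by
    simp [mem_support_iff, coeff_sub, coeff_monomial, Ne.symm huv]
  obtain ⟨p, hp, hup⟩ := mem_ideal_span_X_image.1 hmem u hsupp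
  exact hup (hu p hp)

theorem moveClass_eq_of_toricIdeal_le {K : Type*} [Field K] (hC : ∀ δ ∈ C, δ.IsCorner)
    (hP : Minimal (IsCover C) P) (hJ : toricIdeal K C ≤ varIdeal K (coverVars P))
    {u v : Fin m × Fin n →₀ ℕ} (hu : coverWeight C P u = 0)
    (h : multiDegree C v = multiDegree C (.single 0 1 + u)) :
    moveClass C v = moveClass C (.single 0 1 + u) := by
  replace hu : ∀ p ∈ coverVars P, u p = 0 := fun p hp =>
    coverWeight_eq_zero_iff.1 hu p (.inl hp)
  obtain ⟨p, hp, hvp⟩ : ∃ p ∈ coverVars P, v p ≠ 0 := by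
    by_contra! hv
    have h0 := hv 0 (.inl rfl)
    simp [eq_of_toricIdeal_le hJ hv h] at h0
  obtain ⟨v, rfl⟩ := exists_eq_single_add hvp
  by_cases hp0 : p = 0
  · subst hp0
    rw [map_add, map_add, add_right_inj] at h
    rw [eq_of_toricIdeal_le hJ hu h.symm]
  obtain ⟨e, he, q, hq, hqe, heq⟩ := exists_private_farCorner hC hP hp hp0
  have hdeg : multiDegree C (.single q 1 + u) = multiDegree C (.single e 1 + v) := by
    have hpq := congrArg (classDegree C) heq
    simp only [varClass, map_add, classDegree_moveClass] at hpq h ⊢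
    exact add_left_cancel (a := multiDegree C (.single p 1)) (by grind)
  have hquev := eq_of_toricIdeal_le hJ (fun r hr => by
    have hqr : q ≠ r := by rintro rfl; exact hq hr
    simp [hqr, hu r hr]) hdeg
  have hne : q ≠ e := by rintro rfl; exact hqe he
  have hue : u e ≠ 0 := by
    have : u e = 1 + v e := by simpa [hne] using DFunLike.congr_fun hquev e
    omega
  obtain ⟨w, rfl⟩ := exists_eq_single_add hue
  obtain rfl : .single q 1 + w = v := by
    rw [add_left_comm] at hquev
    exact add_left_cancel hquev
  -- `x_p v = x_p x_q w ~ x₀₀ x_e w = x₀₀ u`.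
  simp only [moveClass_single_add]
  grind

end CoverWeight

section MembershipCriterion

variable {m n : ℕ} [NeZero m] [NeZero n] {K : Type*} [Field K] {C : Set (Minor2 m n)}
  {P : Set (Fin m) × Set (Fin n)} {f : MvPolynomial (Fin m × Fin n) K}

theorem two_le_coverWeight_of_mem_support (hC : ∀ δ ∈ C, δ.IsCorner) (hP : IsCover C P)
    (hf : f ∈ minorIdeal K C + varIdeal K (coverVars P) ^ 2) {v : Fin m × Fin n →₀ ℕ}
    (hv : moveClass C v ∈ (classMap K C f).coeff.support) : 2 ≤ coverWeight C P v := by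
  obtain ⟨g, hg, g', hg', rfl⟩ := Submodule.mem_sup.1 hf
  rw [minorIdeal_eq_ker_classMap, RingHom.mem_ker] at hg
  rw [map_add, hg, zero_add] at hv
  obtain ⟨u, hu, huv⟩ := exists_mem_support_moveClass_eq hv
  rw [← coverWeight_eq_of_moveClass_eq hC hP huv]
  refine le_weight_of_mem_span_X_image_pow (fun p hp => ?_) hg' hu
  rw [Set.indicator_of_mem (show p ∈ coverSupport C P from .inl hp), Pi.one_apply]

theorem exists_moveClass_eq_varClass_zero_add (hC : ∀ δ ∈ C, δ.IsCorner)
    (hf : ∀ P, Minimal (IsCover C) P → f ∈ varIdeal K (coverVars P)) {u : Fin m × Fin n →₀ ℕ}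
    (hu : u ∈ f.support) : ∃ z, moveClass C u = varClass C 0 + moveClass C z := by
  by_contra! h
  have hcover : IsCover C ({i | u (i, 0) = 0}, {j | u (0, j) = 0}) := fun e he => by
    by_contra! hne
    have hlegs : (e.1, (0 : Fin n)) ≠ (0, e.2) := fun h =>
      farCorner_fst_ne_zero he (Prod.ext_iff.1 h).1
    obtain ⟨w, rfl⟩ := exists_eq_single_add_single_add hlegs hne.1 hne.2
    apply h (.single e 1 + w)
    simp only [moveClass_single_add]
    rw [← add_assoc, ← varClass_zero_add_farCorner hC he, add_assoc]
  obtain ⟨P, ⟨hP₁, hP₂⟩, hP⟩ := exists_minimal_isCover_le hcover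
  obtain ⟨⟨i, j⟩, hp, hup⟩ := mem_ideal_span_X_image.1 (hf P hP) u hu
  rcases hp with h0 | ⟨rfl : j = 0, hi⟩ | ⟨rfl : i = 0, hj⟩
  · rw [h0] at hup
    obtain ⟨z, rfl⟩ := exists_eq_single_add hup
    exact h z (moveClass_single_add ..)
  · exact hup (hP₁ hi)
  · exact hup (hP₂ hj)

theorem eq_varClass_zero_add_of_classDegree_eq (hC : ∀ δ ∈ C, δ.IsCorner)
    (hf : ∀ P, Minimal (IsCover C) P → ¬ toricIdeal K C ≤ varIdeal K (coverVars P) →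
      f ∈ minorIdeal K C + varIdeal K (coverVars P) ^ 2)
    {u : Fin m × Fin n →₀ ℕ}
    (hu : ∀ z, varClass C 0 + moveClass C u ≠ varClass C 0 + (varClass C 0 + moveClass C z))
    (huf : varClass C 0 + moveClass C u ∈ (classMap K C f).coeff.support) {q : MoveClass C}
    (hq : classDegree C q = classDegree C (varClass C 0 + moveClass C u)) :
    q = varClass C 0 + moveClass C u := by
  obtain ⟨P, hP, hPu⟩ := exists_minimal_isCover_coverWeight_eq_zero hC hu
  rw [← moveClass_single_add] at huf hq ⊢
  by_cases hJ : toricIdeal K C ≤ varIdeal K (coverVars P)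
  · obtain ⟨v, rfl⟩ := moveClass_surjective q
    exact moveClass_eq_of_toricIdeal_le hC hP hJ hPu hq
  · have h := two_le_coverWeight_of_mem_support hC hP.prop (hf P hP hJ) huf
    rw [map_add, hPu, coverWeight_single_zero] at h
    omega

theorem mem_minorIdeal_of_forall_minimal_isCover (hC : ∀ δ ∈ C, δ.IsCorner)
    (hfJ : f ∈ toricIdeal K C)
    (hf : ∀ P, Minimal (IsCover C) P → ¬ toricIdeal K C ≤ varIdeal K (coverVars P) →
      f ∈ minorIdeal K C + varIdeal K (coverVars P) ^ 2) : f ∈ minorIdeal K C := by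
  have hvar : ∀ P, Minimal (IsCover C) P → f ∈ varIdeal K (coverVars P) := fun P hP => by
    by_cases hJ : toricIdeal K C ≤ varIdeal K (coverVars P)
    · exact hJ hfJ
    · exact sup_le (minorIdeal_le_varIdeal_coverVars K hC hP.prop)
        (Ideal.pow_le_self two_ne_zero) (hf P hP hJ)
  refine mem_minorIdeal_of_injOn_classDegree hfJ fun q hq q' hq' h => ?_
  have corner : ∀ q ∈ (classMap K C f).coeff.support, ∃ u, q = varClass C 0 + moveClass C u := by
    intro q hq
    obtain ⟨u, hu, rfl⟩ := exists_mem_support_moveClass_eq hq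
    exact exists_moveClass_eq_varClass_zero_add hC hvar hu
  obtain ⟨u, rfl⟩ := corner q hq
  obtain ⟨u', rfl⟩ := corner q' hq'
  by_cases hu : ∃ z, varClass C 0 + moveClass C u = varClass C 0 + (varClass C 0 + moveClass C z)
  · obtain ⟨z, hz⟩ := hu
    have hdeg : multiDegree C u' = multiDegree C (.single 0 1 + z) := by
      have hz := congrArg (classDegree C) hz
      simp only [varClass, map_add, classDegree_moveClass] at h hz ⊢
      exact add_left_cancel (h.symm.trans hz)
    rw [hz, varClass_zero_add_moveClass hC hdeg]
  · exact (eq_varClass_zero_add_of_classDegree_eq hC hf (not_exists.1 hu) hq h.symm).symm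

end MembershipCriterion

theorem statement13 (K : Type*) [Field K] (m n : ℕ) [NeZero m] [NeZero n]
    (C : Set (Minor2 m n)) (hC : ∀ δ ∈ C, δ.a1 = 0 ∧ δ.b1 = 0) :
    minorIdeal K C =
      (⨅ W ∈ {W : Set (Fin m × Fin n) |
          Admissible C W ∧ PW K C W ∈ (minorIdeal K C).minimalPrimes},
        PW K C W) ⊓
      (⨅ W ∈ {W : Set (Fin m × Fin n) |
          (Admissible C W ∧ PW K C W ∈ (minorIdeal K C).minimalPrimes) ∧ W ≠ ∅},
        (minorIdeal K C + PW K C W ^ 2)) := by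
  refine le_antisymm (le_inf (le_iInf₂ fun W hW => hW.2.1.2) (le_iInf₂ fun W _ => le_sup_left)) ?_
  rintro f ⟨hf₁, hf₂⟩
  simp only [SetLike.mem_coe, Submodule.mem_iInf] at hf₁ hf₂
  have hfJ : f ∈ toricIdeal K C := by
    have h := hf₁ ∅ ⟨admissible_empty C, PW_empty K C ▸ toricIdeal_mem_minimalPrimes hC⟩
    rwa [PW_empty] at h
  refine mem_minorIdeal_of_forall_minimal_isCover hC hfJ fun P hP hJ => ?_
  have hne : C.Nonempty := by
    by_contra! rfl
    exact hJ (toricIdeal_empty.trans_le bot_le)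
  have hprime := varIdeal_coverVars_mem_minimalPrimes hC hP hJ
  have h0 : coverVars P ≠ ∅ := Set.Nonempty.ne_empty ⟨0, .inl rfl⟩
  have h := hf₂ (coverVars P) ⟨⟨admissible_coverVars hC hP hne, by rwa [PW_coverVars hC]⟩, h0⟩
  rwa [PW_coverVars hC] at h
end

section
/- Let C be an arbitrary set of corner minors of M, and let h₁ and v₁ be the vertices of G(C) corresponding to the maximal horizontal and vertical intervals of C containing x₁₁. Then for every cycle σ in G(C) passing through neither v₁ nor h₁, one has x₁₁² f_σ ∈ I(C). -/
open MvPolynomial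

/-!
A vertex `x_{ab}` of `C` lying in neither interval through `x₁₁` can only be opposite to `x₁₁`
in a minor of `C`, so `x₁₁ x_{ab} = x_{a1} x_{1b}` modulo `I(C)`. Along a closed walk this
factors every `x₁₁ p_k` as `A_k B_k` and every `x₁₁ q_k` as `A_{k+1} B_k`. By induction `x₁₁²
p_0 ⋯ p_k = x₁₁ A_0 B_k q_0 ⋯ q_{k-1}`: the `x₁₁` on the right splits `p_{k+1}` into `A_{k+1}
B_{k+1}`, and `A_{k+1} B_k` gives it back as `x₁₁ q_k`. At the end of the walk, `A_0 B_k` is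
itself the factorization of `x₁₁ q_k`.
-/

section Telescoping

variable {M : Type*} [CommMonoid M] {r : ℕ} {y : M}

theorem sq_mul_prod_eq_mul_prod_of_path {A B P : Fin (r + 1) → M} {Q : Fin r → M}
    (hP : ∀ k, y * P k = A k * B k) (hQ : ∀ k, y * Q k = A k.succ * B k.castSucc) :
    y ^ 2 * ∏ k, P k = y * (A 0 * B (Fin.last r)) * ∏ k, Q k := by
  induction r with
  | zero =>
    calc
      y ^ 2 * ∏ k, P k = y * (y * P 0) := by simp [pow_two, mul_assoc]
      _ = _ := by simp [hP]
  | succ r ih =>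
    have ih := ih (P := fun k => P k.castSucc) (Q := fun k => Q k.castSucc)
      (fun k => hP k.castSucc) (fun k => hQ k.castSucc)
    rw [Fin.prod_univ_castSucc P, Fin.prod_univ_castSucc Q]
    set b := B (Fin.last r).castSucc
    set prodQ := ∏ k : Fin r, Q k.castSucc
    calc
      y ^ 2 * ((∏ k : Fin (r + 1), P k.castSucc) * P (Fin.last (r + 1)))
          = y * (A 0 * b) * prodQ * P (Fin.last (r + 1)) := by
        rw [← mul_assoc, ih, Fin.castSucc_zero]
      _ = A 0 * b * prodQ * (y * P (Fin.last (r + 1))) := by ac_rfl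
      _ = A 0 * B (Fin.last (r + 1)) * prodQ * (A (Fin.last r).succ * b) := by
        rw [hP, Fin.succ_last]; ac_rfl
      _ = A 0 * B (Fin.last (r + 1)) * prodQ * (y * Q (Fin.last r)) := by rw [hQ]
      _ = y * (A 0 * B (Fin.last (r + 1))) * (prodQ * Q (Fin.last r)) := by ac_rfl

theorem sq_mul_prod_eq_sq_mul_prod_of_cycle {A B P Q : Fin (r + 1) → M}
    (hP : ∀ k, y * P k = A k * B k) (hQ : ∀ k, y * Q k = A (k + 1) * B k) :
    y ^ 2 * ∏ k, P k = y ^ 2 * ∏ k, Q k := by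
  have hQ_path (k : Fin r) : y * Q k.castSucc = A k.succ * B k.castSucc := by
    rw [hQ, Fin.coeSucc_eq_succ]
  have hQ_last : y * Q (Fin.last r) = A 0 * B (Fin.last r) := by rw [hQ, Fin.last_add_one]
  rw [sq_mul_prod_eq_mul_prod_of_path hP hQ_path, ← hQ_last, Fin.prod_univ_castSucc Q, pow_two]
  ac_rfl

end Telescoping

section Intervals

variable {m n : ℕ} {C : Set (Minor2 m n)} {δ : Minor2 m n} {p q c : Fin m × Fin n}

theorem Minor2.VertEdge.snd_eq (h : δ.VertEdge p q) : p.2 = q.2 := by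
  rcases h with h | h <;> obtain ⟨rfl, rfl⟩ | ⟨rfl, rfl⟩ := Set.pair_eq_pair_iff.1 h <;> rfl

theorem Minor2.HorizEdge.fst_eq (h : δ.HorizEdge p q) : p.1 = q.1 := by
  rcases h with h | h <;> obtain ⟨rfl, rfl⟩ | ⟨rfl, rfl⟩ := Set.pair_eq_pair_iff.1 h <;> rfl

theorem snd_eq_of_vClass_eq (h : vClass C p = vClass C q) : p.2 = q.2 :=
  congrArg (Quot.lift Prod.snd fun _ _ ⟨_, _, hδ⟩ => hδ.snd_eq) h

theorem fst_eq_of_hClass_eq (h : hClass C p = hClass C q) : p.1 = q.1 :=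
  congrArg (Quot.lift Prod.fst fun _ _ ⟨_, _, hδ⟩ => hδ.fst_eq) h

theorem vClass_a2_b1 (hδ : δ ∈ C) : vClass C (δ.a2, δ.b1) = vClass C (δ.a1, δ.b1) :=
  (Quot.sound ⟨δ, hδ, Or.inl rfl⟩).symm

theorem hClass_a1_b2 (hδ : δ ∈ C) : hClass C (δ.a1, δ.b2) = hClass C (δ.a1, δ.b1) :=
  (Quot.sound ⟨δ, hδ, Or.inl rfl⟩).symm

theorem exists_eq_a2_b2_of_vClass_ne_of_hClass_ne (hC : ∀ δ ∈ C, (δ.a1, δ.b1) = c)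
    (hp : p ∈ vertexSetOf C) (hv : vClass C p ≠ vClass C c) (hh : hClass C p ≠ hClass C c) :
    ∃ δ ∈ C, p = (δ.a2, δ.b2) := by
  obtain ⟨δ, hδ, hp⟩ := Set.mem_iUnion₂.1 hp
  rw [← hC δ hδ] at hv hh
  rcases hp with rfl | rfl | rfl | rfl
  · exact absurd rfl hv
  · exact absurd (hClass_a1_b2 hδ) hh
  · exact absurd (vClass_a2_b1 hδ) hv
  · exact ⟨δ, hδ, rfl⟩

end Intervals

section MinorIdeal

variable (K : Type*) [Field K] {m n : ℕ} {C : Set (Minor2 m n)} {c : Fin m × Fin n}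

theorem mk_minorIdeal_X_mul_X {δ : Minor2 m n} (hδ : δ ∈ C) :
    Ideal.Quotient.mk (minorIdeal K C) (X (δ.a1, δ.b1) * X (δ.a2, δ.b2)) =
      Ideal.Quotient.mk (minorIdeal K C) (X (δ.a2, δ.b1) * X (δ.a1, δ.b2)) := by
  rw [Ideal.Quotient.eq, mul_comm (X (δ.a2, δ.b1))]
  exact Ideal.subset_span ⟨δ, hδ, rfl⟩

theorem mk_minorIdeal_X_corner_mul_X (hC : ∀ δ ∈ C, (δ.a1, δ.b1) = c) {p : Fin m × Fin n}
    (hp : p ∈ vertexSetOf C) (hv : vClass C p ≠ vClass C c) (hh : hClass C p ≠ hClass C c) :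
    Ideal.Quotient.mk (minorIdeal K C) (X c * X p) =
      Ideal.Quotient.mk (minorIdeal K C) (X (p.1, c.2) * X (c.1, p.2)) := by
  obtain ⟨δ, hδ, rfl⟩ := exists_eq_a2_b2_of_vClass_ne_of_hClass_ne hC hp hv hh
  obtain rfl := hC δ hδ
  exact mk_minorIdeal_X_mul_X K hδ

theorem statement14_general (hC : ∀ δ ∈ C, (δ.a1, δ.b1) = c) {r : ℕ}
    {p q : Fin (r + 1) → Fin m × Fin n}
    (hp : ∀ k, p k ∈ vertexSetOf C) (hq : ∀ k, q k ∈ vertexSetOf C)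
    (hpq : ∀ k, vClass C (p k) = vClass C (q k))
    (hqp : ∀ k, hClass C (q k) = hClass C (p (k + 1)))
    (hv : ∀ k, vClass C (p k) ≠ vClass C c) (hh : ∀ k, hClass C (p k) ≠ hClass C c) :
    X c ^ 2 * ((∏ k, X (p k)) - ∏ k, X (q k)) ∈ minorIdeal K C := by
  let π := Ideal.Quotient.mk (minorIdeal K C)
  have hP (k) : π (X c) * π (X (p k)) = π (X ((p k).1, c.2)) * π (X (c.1, (p k).2)) := by
    simpa only [map_mul] using mk_minorIdeal_X_corner_mul_X K hC (hp k) (hv k) (hh k)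
  have hQ (k) : π (X c) * π (X (q k)) = π (X ((p (k + 1)).1, c.2)) * π (X (c.1, (p k).2)) := by
    rw [← fst_eq_of_hClass_eq (hqp k), snd_eq_of_vClass_eq (hpq k)]
    simpa only [map_mul] using
      mk_minorIdeal_X_corner_mul_X K hC (hq k) (hpq k ▸ hv k) (hqp k ▸ hh (k + 1))
  have hPQ : π (X c) ^ 2 * ∏ k, π (X (p k)) = π (X c) ^ 2 * ∏ k, π (X (q k)) :=
    sq_mul_prod_eq_sq_mul_prod_of_cycle hP hQ
  rw [mul_sub, ← Ideal.Quotient.eq]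
  simpa only [map_mul, map_pow, map_prod] using hPQ

end MinorIdeal

theorem statement14 (K : Type*) [Field K] (m n : ℕ) [NeZero m] [NeZero n]
    (C : Set (Minor2 m n)) (hC : ∀ δ ∈ C, δ.a1 = 0 ∧ δ.b1 = 0)
    (σ : CycleIn C)
    (hv : ∀ k, vClass C (σ.p k) ≠ vClass C ((0 : Fin m), (0 : Fin n)))
    (hh : ∀ k, hClass C (σ.p k) ≠ hClass C ((0 : Fin m), (0 : Fin n))) :
    X ((0 : Fin m), (0 : Fin n)) ^ 2 * cycleBinom K σ ∈ minorIdeal K C :=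
  statement14_general K (fun δ hδ => Prod.ext_iff.2 (hC δ hδ))
    σ.p_mem σ.q_mem σ.shareV σ.shareH hv hh
end

section
/- Let m, n > 2 and let C be the set of all corner minors of M, so that I(C) = (x₁₁x_{ij} − x_{1j}x_{i1} : 2 ≤ i ≤ m, 2 ≤ j ≤ n) ⊆ S. Then the colon ideal (I(C) + x₁₁·I₂(M_{2,2})) : x₁₁ equals I₂(M). -/
/-!
Multiplication by `x₁₁` carries every 2-minor of `M` into `I(C) + x₁₁ I₂(M_{2,2})`: a minor using
only one of the first row and first column is moved into `I(C)` by a syzygy such as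
`x₁₁ [1,b|c,d] = x₁c [1,b|1,d] - x₁d [1,b|1,c]`. Conversely, everything reduces to `x₁₁` being
regular modulo `I₂(M)`. This holds because `I₂(M)` is the kernel of the Segre homomorphism
`x_ij ↦ y_i z_j`: two monomials with the same image have the same row and column indices, so
exchanges `x_ac x_bd ↔ x_ad x_bc` turn one into the other.
-/

open MvPolynomial

/-- The Hilbert function `i ↦ dim_K (S/I)_i` of the quotient by a (homogeneous) ideal `I`,
for the standard grading by total degree. -/
noncomputable def hilbFun (K : Type*) [Field K] {m n : ℕ}
    (I : Ideal (MvPolynomial (Fin m × Fin n) K)) (i : ℕ) : ℕ :=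
  Module.finrank K (homogeneousSubmodule (Fin m × Fin n) K i) -
    Module.finrank K
      (Submodule.restrictScalars K I ⊓ homogeneousSubmodule (Fin m × Fin n) K i :
        Submodule K (MvPolynomial (Fin m × Fin n) K))

/-- `P` is the Hilbert–Poincaré polynomial of `S/I`:  the Hilbert series of `S/I` equals
`P(z)/(1-z)^d` where `d` is the Krull dimension of `S/I`. -/
noncomputable def IsHilbNum (K : Type*) [Field K] {m n : ℕ}
    (I : Ideal (MvPolynomial (Fin m × Fin n) K)) (P : Polynomial ℤ) : Prop :=
  ∃ d : ℕ, ringKrullDim (MvPolynomial (Fin m × Fin n) K ⧸ I) = (d : WithBot ℕ∞) ∧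
    (PowerSeries.mk fun i => (hilbFun K I i : ℤ)) * (1 - PowerSeries.X) ^ d =
      PowerSeries.mk fun i => P.coeff i

/-- `I(C)` for `C` the set of all corner-interval minors:
`(x_{a,1}x_{b,k} − x_{b,1}x_{a,k} : 1 ≤ a < b ≤ m, 2 ≤ k ≤ n)` (here `0`-indexed). -/
noncomputable def cornerIntervalIdealAll (K : Type*) [Field K] (m n : ℕ) [NeZero n] :
    Ideal (MvPolynomial (Fin m × Fin n) K) :=
  Ideal.span {f | ∃ (a b : Fin m) (k : Fin n), a < b ∧ k ≠ 0 ∧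
    f = X (a, (0 : Fin n)) * X (b, k) - X (b, (0 : Fin n)) * X (a, k)}

/-- The determinantal ideal `I₂(M)` generated by all 2-minors of `M`. -/
noncomputable def detIdeal2 (K : Type*) [Field K] (m n : ℕ) :
    Ideal (MvPolynomial (Fin m × Fin n) K) :=
  Ideal.span {f | ∃ (a b : Fin m) (c d : Fin n), a < b ∧ c < d ∧
    f = X (a, c) * X (b, d) - X (a, d) * X (b, c)}

/-- The ideal `I₂(M_{t+1,1})` generated by all 2-minors of the submatrix with
(0-indexed) rows `≥ t`, viewed inside the full polynomial ring `S`. -/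
noncomputable def detIdeal2From (K : Type*) [Field K] (m n : ℕ) (t : ℕ) :
    Ideal (MvPolynomial (Fin m × Fin n) K) :=
  Ideal.span {f | ∃ (a b : Fin m) (c d : Fin n), a < b ∧ c < d ∧ t ≤ a.val ∧
    f = X (a, c) * X (b, d) - X (a, d) * X (b, c)}

/-- The ideal `I₂(M_{2,2})` generated by the 2-minors not involving the first row
nor the first column, viewed inside the full polynomial ring `S`. -/
noncomputable def detIdeal2_22 (K : Type*) [Field K] (m n : ℕ) [NeZero m] [NeZero n] :
    Ideal (MvPolynomial (Fin m × Fin n) K) :=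
  Ideal.span {f | ∃ (a b : Fin m) (c d : Fin n), a < b ∧ c < d ∧ a ≠ 0 ∧ c ≠ 0 ∧
    f = X (a, c) * X (b, d) - X (a, d) * X (b, c)}

/-- `I(C)` for `C` the set of all corner minors:
`(x₁₁x_{ij} − x_{1j}x_{i1} : 2 ≤ i ≤ m, 2 ≤ j ≤ n)` (here `0`-indexed). -/
noncomputable def cornerIdealAll (K : Type*) [Field K] (m n : ℕ) [NeZero m] [NeZero n] :
    Ideal (MvPolynomial (Fin m × Fin n) K) :=
  Ideal.span {f | ∃ (i : Fin m) (j : Fin n), i ≠ 0 ∧ j ≠ 0 ∧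
    f = X ((0 : Fin m), (0 : Fin n)) * X (i, j) - X ((0 : Fin m), j) * X (i, (0 : Fin n))}

/-- The ideal `H = (x₁₁, …, x_{1n})` generated by the variables of the first row. -/
noncomputable def rowIdeal (K : Type*) [Field K] (m n : ℕ) [NeZero m] :
    Ideal (MvPolynomial (Fin m × Fin n) K) :=
  Ideal.span {f | ∃ j : Fin n, f = X ((0 : Fin m), j)}

/-- The ideal `V = (x₁₁, x₂₁, …, x_{m1})` generated by the variables of the first column. -/
noncomputable def colIdeal (K : Type*) [Field K] (m n : ℕ) [NeZero n] :
    Ideal (MvPolynomial (Fin m × Fin n) K) :=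
  Ideal.span {f | ∃ i : Fin m, f = X (i, (0 : Fin n))}

section Exchange

variable {ι κ M : Type*} [CommMonoid M] {y : ι × κ → M}

theorem exists_prod_map_eq_mul_of_exchange
    (hy : ∀ a b c d, y (a, c) * y (b, d) = y (a, d) * y (b, c))
    {t : Multiset (ι × κ)} {i : ι} {j : κ} (hi : i ∈ t.map Prod.fst) (hj : j ∈ t.map Prod.snd) :
    ∃ u : Multiset (ι × κ), t.map Prod.fst = i ::ₘ u.map Prod.fst ∧
      t.map Prod.snd = j ::ₘ u.map Prod.snd ∧ (t.map y).prod = y (i, j) * (u.map y).prod := by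
  obtain ⟨⟨i, d⟩, hid, rfl⟩ := Multiset.mem_map.1 hi
  obtain ⟨⟨b, j⟩, hbj, rfl⟩ := Multiset.mem_map.1 hj
  obtain ⟨t, rfl⟩ := Multiset.exists_cons_of_mem hid
  obtain heq | hbj := Multiset.mem_cons.1 hbj
  · obtain ⟨rfl, rfl⟩ := Prod.mk.inj heq
    exact ⟨t, by simp⟩
  · obtain ⟨u, rfl⟩ := Multiset.exists_cons_of_mem hbj
    refine ⟨(b, d) ::ₘ u, by simp, by simp [Multiset.cons_swap], ?_⟩
    simp only [Multiset.map_cons, Multiset.prod_cons, ← mul_assoc, hy i b d j]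

theorem prod_map_eq_of_exchange
    (hy : ∀ a b c d, y (a, c) * y (b, d) = y (a, d) * y (b, c)) {s t : Multiset (ι × κ)}
    (hfst : s.map Prod.fst = t.map Prod.fst) (hsnd : s.map Prod.snd = t.map Prod.snd) :
    (s.map y).prod = (t.map y).prod := by
  induction s using Multiset.induction generalizing t with
  | empty =>
    obtain rfl : t = 0 := Multiset.map_eq_zero.1 hfst.symm
    rfl
  | cons p s ih =>
    obtain ⟨u, htfst, htsnd, htprod⟩ := exists_prod_map_eq_mul_of_exchange hy
      (hfst ▸ Multiset.mem_map_of_mem Prod.fst (Multiset.mem_cons_self p s))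
      (hsnd ▸ Multiset.mem_map_of_mem Prod.snd (Multiset.mem_cons_self p s))
    rw [htfst, Multiset.map_cons, Multiset.cons_inj_right] at hfst
    rw [htsnd, Multiset.map_cons, Multiset.cons_inj_right] at hsnd
    rw [htprod, Multiset.map_cons, Multiset.prod_cons, ih hfst hsnd]

end Exchange

theorem ker_le_restrictScalars_of_map_monomial {R σ τ : Type*} [CommRing R]
    {I : Ideal (MvPolynomial σ R)} {φ : MvPolynomial σ R →ₗ[R] MvPolynomial τ R}
    {g : (σ →₀ ℕ) → (τ →₀ ℕ)} (hφ : ∀ u, φ (monomial u 1) = monomial (g u) 1)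
    (hI : ∀ u v, g u = g v → (monomial u 1 - monomial v 1 : MvPolynomial σ R) ∈ I) :
    LinearMap.ker φ ≤ I.restrictScalars R := by
  -- Choosing a preimage of each monomial in the image yields `ψ` with `ψ ∘ φ` the quotient map.
  let q : (σ →₀ ℕ) → MvPolynomial σ R ⧸ I := fun u => Ideal.Quotient.mk I (monomial u 1)
  have hq : Function.FactorsThrough q g := fun u v huv => Ideal.Quotient.eq.2 (hI u v huv)
  let ψ : MvPolynomial τ R →ₗ[R] MvPolynomial σ R ⧸ I :=
    (basisMonomials τ R).constr R (Function.extend g q 0)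
  have hψ (u : τ →₀ ℕ) : ψ (monomial u 1) = Function.extend g q 0 u := by
    simpa only [coe_basisMonomials] using (basisMonomials τ R).constr_basis R _ u
  have hψφ : ψ ∘ₗ φ = (Ideal.Quotient.mkₐ R I).toLinearMap :=
    (basisMonomials σ R).ext fun u => by
      simp only [coe_basisMonomials, LinearMap.comp_apply, hφ, hψ, hq.extend_apply]
      rfl
  intro f hf
  refine Ideal.Quotient.eq_zero_iff_mem.1 ?_
  calc Ideal.Quotient.mk I f = ψ (φ f) := (LinearMap.congr_fun hψφ f).symm
    _ = 0 := by rw [LinearMap.mem_ker.1 hf, map_zero]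

section TwoMinors

variable {R ι κ : Type*} [CommRing R]

variable (R) in
/-- The 2-minor of the generic matrix on rows `a, b` and columns `c, d`. The indices are arbitrary,
so the minor vanishes when one is repeated. -/
noncomputable def twoMinor (a b : ι) (c d : κ) : MvPolynomial (ι × κ) R :=
  X (a, c) * X (b, d) - X (a, d) * X (b, c)

theorem twoMinor_swap_rows (a b : ι) (c d : κ) : twoMinor R b a c d = -twoMinor R a b c d := by
  unfold twoMinor; ring

theorem twoMinor_swap_cols (a b : ι) (c d : κ) : twoMinor R a b d c = -twoMinor R a b c d := by
  unfold twoMinor; ring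

theorem twoMinor_self_rows (a : ι) (c d : κ) : twoMinor R a a c d = 0 := by
  unfold twoMinor; ring

theorem twoMinor_self_cols (a b : ι) (c : κ) : twoMinor R a b c c = 0 :=
  sub_self _

variable (R) in
/-- The ideal generated by the 2-minors of the submatrix of the generic matrix with rows in `s` and
columns in `t`. -/
noncomputable def twoMinorIdeal (s : Set ι) (t : Set κ) : Ideal (MvPolynomial (ι × κ) R) :=
  Ideal.span {f | ∃ a ∈ s, ∃ b ∈ s, ∃ c ∈ t, ∃ d ∈ t, f = twoMinor R a b c d}

variable (R) in
/-- The ideal generated by the corner minors `[i₀,i|j₀,j]`. All `i` and `j` are allowed, since the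
minors with `i = i₀` or `j = j₀` vanish. -/
noncomputable def cornerMinorIdeal (i₀ : ι) (j₀ : κ) : Ideal (MvPolynomial (ι × κ) R) :=
  Ideal.span {f | ∃ i j, f = twoMinor R i₀ i j₀ j}

theorem twoMinor_mem_twoMinorIdeal {s : Set ι} {t : Set κ} {a b : ι} {c d : κ}
    (ha : a ∈ s) (hb : b ∈ s) (hc : c ∈ t) (hd : d ∈ t) :
    twoMinor R a b c d ∈ twoMinorIdeal R s t :=
  Ideal.subset_span ⟨a, ha, b, hb, c, hc, d, hd, rfl⟩

theorem twoMinor_mem_cornerMinorIdeal (i₀ i : ι) (j₀ j : κ) :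
    twoMinor R i₀ i j₀ j ∈ cornerMinorIdeal R i₀ j₀ :=
  Ideal.subset_span ⟨i, j, rfl⟩

theorem twoMinorIdeal_mono {s s' : Set ι} {t t' : Set κ} (hs : s ⊆ s') (ht : t ⊆ t') :
    twoMinorIdeal R s t ≤ twoMinorIdeal R s' t' := by
  refine Ideal.span_le.2 ?_
  rintro _ ⟨a, ha, b, hb, c, hc, d, hd, rfl⟩
  exact twoMinor_mem_twoMinorIdeal (hs ha) (hs hb) (ht hc) (ht hd)

theorem cornerMinorIdeal_le_twoMinorIdeal_univ (i₀ : ι) (j₀ : κ) :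
    cornerMinorIdeal R i₀ j₀ ≤ twoMinorIdeal R Set.univ Set.univ := by
  refine Ideal.span_le.2 ?_
  rintro _ ⟨i, j, rfl⟩
  exact twoMinor_mem_twoMinorIdeal trivial trivial trivial trivial

theorem twoMinorIdeal_eq_span_lt [LinearOrder ι] [LinearOrder κ] (s : Set ι) (t : Set κ) :
    twoMinorIdeal R s t = Ideal.span {f | ∃ a ∈ s, ∃ b ∈ s, ∃ c ∈ t, ∃ d ∈ t,
      a < b ∧ c < d ∧ f = twoMinor R a b c d} := by
  refine le_antisymm (Ideal.span_le.2 ?_) (Ideal.span_mono ?_)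
  · rintro _ ⟨a, ha, b, hb, c, hc, d, hd, rfl⟩
    rw [SetLike.mem_coe]
    wlog hab : a ≤ b generalizing a b
    · rw [twoMinor_swap_rows, neg_mem_iff]
      exact this b hb a ha (le_of_not_ge hab)
    wlog hcd : c ≤ d generalizing c d
    · rw [twoMinor_swap_cols, neg_mem_iff]
      exact this d hd c hc (le_of_not_ge hcd)
    obtain rfl | hab := hab.eq_or_lt
    · exact twoMinor_self_rows (R := R) a c d ▸ zero_mem _
    obtain rfl | hcd := hcd.eq_or_lt
    · exact twoMinor_self_cols (R := R) a b c ▸ zero_mem _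
    exact Ideal.subset_span ⟨a, ha, b, hb, c, hc, d, hd, hab, hcd, rfl⟩
  · rintro _ ⟨a, ha, b, hb, c, hc, d, hd, -, -, rfl⟩
    exact ⟨a, ha, b, hb, c, hc, d, hd, rfl⟩

theorem monomial_sub_monomial_mem_twoMinorIdeal {u v : ι × κ →₀ ℕ}
    (hfst : u.mapDomain Prod.fst = v.mapDomain Prod.fst)
    (hsnd : u.mapDomain Prod.snd = v.mapDomain Prod.snd) :
    (monomial u 1 - monomial v 1 : MvPolynomial (ι × κ) R) ∈
      twoMinorIdeal R Set.univ Set.univ := by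
  let q := Ideal.Quotient.mk (twoMinorIdeal R (Set.univ : Set ι) (Set.univ : Set κ))
  have exchange (a b : ι) (c d : κ) :
      q (X (a, c)) * q (X (b, d)) = q (X (a, d)) * q (X (b, c)) := by
    rw [← map_mul, ← map_mul, Ideal.Quotient.eq]
    exact twoMinor_mem_twoMinorIdeal trivial trivial trivial trivial
  have q_monomial (w : ι × κ →₀ ℕ) :
      q (monomial w 1) = (w.toMultiset.map fun p => q (X p)).prod := by
    rw [monomial_eq, C_1, one_mul, map_finsuppProd, Finsupp.toMultiset_map,
      Finsupp.prod_toMultiset, Finsupp.prod_mapDomain_index (by simp) (by simp [pow_add])]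
    simp only [map_pow]
  refine Ideal.Quotient.eq.1 (?_ : q _ = q _)
  rw [q_monomial, q_monomial]
  apply prod_map_eq_of_exchange exchange
  · rw [Finsupp.toMultiset_map, Finsupp.toMultiset_map, hfst]
  · rw [Finsupp.toMultiset_map, Finsupp.toMultiset_map, hsnd]

variable (R ι κ) in
/-- The Segre homomorphism `x_ij ↦ y_i z_j`, where the variables `y` are indexed by the left
summand of `ι ⊕ κ` and the variables `z` by the right one. -/
noncomputable def segreHom : MvPolynomial (ι × κ) R →ₐ[R] MvPolynomial (ι ⊕ κ) R :=
  aeval fun p => X (Sum.inl p.1) * X (Sum.inr p.2)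

theorem segreHom_X (p : ι × κ) : segreHom R ι κ (X p) = X (Sum.inl p.1) * X (Sum.inr p.2) :=
  aeval_X _ p

theorem segreHom_monomial (u : ι × κ →₀ ℕ) :
    segreHom R ι κ (monomial u 1) =
      monomial ((u.mapDomain Prod.fst).sumElim (u.mapDomain Prod.snd)) 1 := by
  rw [segreHom, aeval_monomial, map_one, one_mul, monomial_eq, C_1, one_mul, Finsupp.prod_sumElim,
    Finsupp.prod_mapDomain_index (by simp) (by simp [pow_add]),
    Finsupp.prod_mapDomain_index (by simp) (by simp [pow_add]), ← Finsupp.prod_mul]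
  simp only [mul_pow, Function.comp_apply]

theorem ker_segreHom :
    RingHom.ker (segreHom R ι κ) = twoMinorIdeal R Set.univ Set.univ := by
  refine le_antisymm (fun f hf => ?_) (Ideal.span_le.2 ?_)
  · refine ker_le_restrictScalars_of_map_monomial (I := twoMinorIdeal R Set.univ Set.univ)
      (φ := (segreHom R ι κ).toLinearMap) segreHom_monomial (fun u v huv => ?_) hf
    obtain ⟨hfst, hsnd⟩ := Prod.mk.inj (Finsupp.sumFinsuppEquivProdFinsupp.symm.injective huv)
    exact monomial_sub_monomial_mem_twoMinorIdeal hfst hsnd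
  · rintro _ ⟨a, -, b, -, c, -, d, -, rfl⟩
    simp only [SetLike.mem_coe, RingHom.mem_ker, twoMinor, map_sub, map_mul, segreHom_X]
    ring

theorem mem_twoMinorIdeal_of_mul_X_mem {f : MvPolynomial (ι × κ) R} {p : ι × κ}
    (h : f * X p ∈ twoMinorIdeal R Set.univ Set.univ) : f ∈ twoMinorIdeal R Set.univ Set.univ := by
  rw [← ker_segreHom, RingHom.mem_ker] at h ⊢
  rw [map_mul, segreHom_X] at h
  exact (isRegular_X.mul isRegular_X).right.mul_right_eq_zero_iff.1 h

theorem X_mul_twoMinor_corner_row_mem_cornerMinorIdeal (i₀ b : ι) (j₀ c d : κ) :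
    X (i₀, j₀) * twoMinor R i₀ b c d ∈ cornerMinorIdeal R i₀ j₀ := by
  have syzygy : X (i₀, j₀) * twoMinor R i₀ b c d =
      X (i₀, c) * twoMinor R i₀ b j₀ d - X (i₀, d) * twoMinor R i₀ b j₀ c := by
    unfold twoMinor; ring
  rw [syzygy]
  exact sub_mem (Ideal.mul_mem_left _ _ (twoMinor_mem_cornerMinorIdeal i₀ b j₀ d))
    (Ideal.mul_mem_left _ _ (twoMinor_mem_cornerMinorIdeal i₀ b j₀ c))

theorem X_mul_twoMinor_corner_col_mem_cornerMinorIdeal (i₀ a b : ι) (j₀ d : κ) :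
    X (i₀, j₀) * twoMinor R a b j₀ d ∈ cornerMinorIdeal R i₀ j₀ := by
  have syzygy : X (i₀, j₀) * twoMinor R a b j₀ d =
      X (a, j₀) * twoMinor R i₀ b j₀ d - X (b, j₀) * twoMinor R i₀ a j₀ d := by
    unfold twoMinor; ring
  rw [syzygy]
  exact sub_mem (Ideal.mul_mem_left _ _ (twoMinor_mem_cornerMinorIdeal i₀ b j₀ d))
    (Ideal.mul_mem_left _ _ (twoMinor_mem_cornerMinorIdeal i₀ a j₀ d))

theorem X_mul_twoMinor_mem_cornerMinorIdeal_add (i₀ a b : ι) (j₀ c d : κ) :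
    X (i₀, j₀) * twoMinor R a b c d ∈
      cornerMinorIdeal R i₀ j₀ + Ideal.span {X (i₀, j₀)} * twoMinorIdeal R {i₀}ᶜ {j₀}ᶜ := by
  by_cases ha : a = i₀
  · subst ha
    exact Ideal.mem_sup_left (X_mul_twoMinor_corner_row_mem_cornerMinorIdeal a b j₀ c d)
  by_cases hb : b = i₀
  · subst hb
    rw [twoMinor_swap_rows, mul_neg, neg_mem_iff]
    exact Ideal.mem_sup_left (X_mul_twoMinor_corner_row_mem_cornerMinorIdeal b a j₀ c d)
  by_cases hc : c = j₀
  · subst hc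
    exact Ideal.mem_sup_left (X_mul_twoMinor_corner_col_mem_cornerMinorIdeal i₀ a b c d)
  by_cases hd : d = j₀
  · subst hd
    rw [twoMinor_swap_cols, mul_neg, neg_mem_iff]
    exact Ideal.mem_sup_left (X_mul_twoMinor_corner_col_mem_cornerMinorIdeal i₀ a b d c)
  exact Ideal.mem_sup_right (Ideal.mul_mem_mul (Ideal.mem_span_singleton_self _)
    (twoMinor_mem_twoMinorIdeal ha hb hc hd))

end TwoMinors

theorem statement18_general (R : Type*) [CommRing R] {ι κ : Type*} (i₀ : ι) (j₀ : κ) :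
    (cornerMinorIdeal R i₀ j₀ +
        Ideal.span {(X (i₀, j₀) : MvPolynomial (ι × κ) R)} * twoMinorIdeal R {i₀}ᶜ {j₀}ᶜ).colon
      (Ideal.span {(X (i₀, j₀) : MvPolynomial (ι × κ) R)}) =
      twoMinorIdeal R Set.univ Set.univ := by
  have sum_le : cornerMinorIdeal R i₀ j₀ +
      Ideal.span {X (i₀, j₀)} * twoMinorIdeal R {i₀}ᶜ {j₀}ᶜ ≤
        twoMinorIdeal R Set.univ Set.univ :=
    sup_le (cornerMinorIdeal_le_twoMinorIdeal_univ i₀ j₀) (Ideal.mul_le_right.trans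
      (twoMinorIdeal_mono (Set.subset_univ _) (Set.subset_univ _)))
  refine le_antisymm (fun f hf => ?_) (Ideal.span_le.2 ?_)
  · exact mem_twoMinorIdeal_of_mul_X_mem (sum_le (Ideal.mem_colon_span_singleton.1 hf))
  · rintro _ ⟨a, -, b, -, c, -, d, -, rfl⟩
    rw [SetLike.mem_coe, Ideal.mem_colon_span_singleton, mul_comm (twoMinor R a b c d)]
    exact X_mul_twoMinor_mem_cornerMinorIdeal_add i₀ a b j₀ c d

section FinIndices

variable (K : Type*) [Field K] (m n : ℕ)

theorem detIdeal2_eq_twoMinorIdeal : detIdeal2 K m n = twoMinorIdeal K Set.univ Set.univ := by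
  simp [detIdeal2, twoMinorIdeal_eq_span_lt, twoMinor]

variable [NeZero m] [NeZero n]

theorem detIdeal2_22_eq_twoMinorIdeal : detIdeal2_22 K m n = twoMinorIdeal K {0}ᶜ {0}ᶜ := by
  rw [twoMinorIdeal_eq_span_lt]
  refine congrArg Ideal.span (Set.ext fun f => ⟨?_, ?_⟩)
  · rintro ⟨a, b, c, d, hab, hcd, ha, hc, rfl⟩
    have hb : b ≠ 0 := ((Fin.zero_le a).trans_lt hab).ne'
    have hd : d ≠ 0 := ((Fin.zero_le c).trans_lt hcd).ne'
    exact ⟨a, ha, b, hb, c, hc, d, hd, hab, hcd, rfl⟩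
  · rintro ⟨a, ha, b, -, c, hc, d, -, hab, hcd, rfl⟩
    exact ⟨a, b, c, d, hab, hcd, ha, hc, rfl⟩

theorem cornerIdealAll_eq_cornerMinorIdeal :
    cornerIdealAll K m n = cornerMinorIdeal K (0 : Fin m) (0 : Fin n) := by
  refine le_antisymm (Ideal.span_mono ?_) (Ideal.span_le.2 ?_)
  · rintro _ ⟨i, j, -, -, rfl⟩
    exact ⟨i, j, rfl⟩
  · rintro _ ⟨i, j, rfl⟩
    obtain rfl | hi := eq_or_ne i 0
    · exact twoMinor_self_rows (R := K) (0 : Fin m) 0 j ▸ zero_mem _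
    obtain rfl | hj := eq_or_ne j 0
    · exact twoMinor_self_cols (R := K) 0 i (0 : Fin n) ▸ zero_mem _
    exact Ideal.subset_span ⟨i, j, hi, hj, rfl⟩

end FinIndices

theorem statement18 (K : Type*) [Field K] (m n : ℕ) [NeZero m] [NeZero n]
    (hm : 2 < m) (hn : 2 < n) :
    (cornerIdealAll K m n +
        Ideal.span {(X ((0 : Fin m), (0 : Fin n)) : MvPolynomial (Fin m × Fin n) K)} *
          detIdeal2_22 K m n).colon
      (Ideal.span {(X ((0 : Fin m), (0 : Fin n)) : MvPolynomial (Fin m × Fin n) K)}) =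
      detIdeal2 K m n := by
  rw [cornerIdealAll_eq_cornerMinorIdeal, detIdeal2_22_eq_twoMinorIdeal, detIdeal2_eq_twoMinorIdeal]
  exact statement18_general K 0 0
end
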